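/- arXiv:1504.03308 — 7 statements merged into one kernel-verified Lean document; each statement's English description precedes it below -/
import Mathlib

section
/- Existence of the rough integral of a controlled path against a rough path: Let X = (x, 𝕏) be a p-rough path with control ω on [0,T], V a Banach space, and let (y, y†) be an L(W,V)-valued rough path controlled by X on [0,T], where y†_s ∈ L(W, L(W,V)) is identified with an element of L(W ⊗ W, V). Then there exists a continuous z : [0,T] → V with z_0 = 0 and a constant C ≥ 0 such that |z_t − z_s − y_s x_{s,t} − y_s† 𝕏_{s,t}| ≤ C ω(s,t)^{3/p} for all 0 ≤ s ≤ t ≤ T. -/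
noncomputable section

open scoped BigOperators

/-- `ℝ^n` with the Euclidean norm. -/
abbrev Euc (n : ℕ) : Type := EuclideanSpace ℝ (Fin n)

/-- The `i`-th standard basis vector of `ℝ^n`. -/
def eb {n : ℕ} (i : Fin n) : Euc n := EuclideanSpace.single i 1

/-- Tensor product of two Euclidean vectors, realized in `ℝ^{n×m}` with the Euclidean norm. -/
def tensorE {n m : ℕ} (v : Euc n) (w : Euc m) : EuclideanSpace ℝ (Fin n × Fin m) :=
  (EuclideanSpace.equiv (Fin n × Fin m) ℝ).symm fun p => v p.1 * w p.2

/-- Application of the (unique) linear extension of a bilinear map `B` to a tensor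
`X ∈ ℝ^n ⊗ ℝ^m ≅ ℝ^{n × m}`. -/
def tapply {n m : ℕ} {V : Type*} [NormedAddCommGroup V] [NormedSpace ℝ V]
    (B : Euc n → Euc m → V) (X : EuclideanSpace ℝ (Fin n × Fin m)) : V :=
  ∑ q : Fin n × Fin m, X q • B (eb q.1) (eb q.2)
/-- `ω` is a control on the simplex `{(s,t) : 0 ≤ s ≤ t ≤ T}`. -/
structure IsControl (T : ℝ) (ω : ℝ → ℝ → ℝ) : Prop where
  cont : ContinuousOn (fun q : ℝ × ℝ => ω q.1 q.2)
    {q : ℝ × ℝ | 0 ≤ q.1 ∧ q.1 ≤ q.2 ∧ q.2 ≤ T}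
  nonneg : ∀ ⦃s t : ℝ⦄, 0 ≤ s → s ≤ t → t ≤ T → 0 ≤ ω s t
  zero : ∀ ⦃s : ℝ⦄, 0 ≤ s → s ≤ T → ω s s = 0
  superadditive : ∀ ⦃s t u : ℝ⦄, 0 ≤ s → s ≤ t → t ≤ u → u ≤ T → ω s t + ω t u ≤ ω s u
/-- `(x, XX)` is a `p`-rough path with control `ω` on `[0,T]`. -/
structure IsRoughPath (T p : ℝ) {k : ℕ} (ω : ℝ → ℝ → ℝ)
    (x : ℝ → Euc k) (XX : ℝ → ℝ → EuclideanSpace ℝ (Fin k × Fin k)) : Prop where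
  cont_x : ContinuousOn x (Set.Icc 0 T)
  cont_XX : ContinuousOn (fun q : ℝ × ℝ => XX q.1 q.2)
    {q : ℝ × ℝ | 0 ≤ q.1 ∧ q.1 ≤ q.2 ∧ q.2 ≤ T}
  chen : ∀ ⦃s t u : ℝ⦄, 0 ≤ s → s ≤ t → t ≤ u → u ≤ T →
    XX s u = XX s t + XX t u + tensorE (x t - x s) (x u - x t)
  bound_x : ∀ ⦃s t : ℝ⦄, 0 ≤ s → s ≤ t → t ≤ T → ‖x t - x s‖ ≤ ω s t ^ (1 / p)
  bound_XX : ∀ ⦃s t : ℝ⦄, 0 ≤ s → s ≤ t → t ≤ T → ‖XX s t‖ ≤ ω s t ^ (2 / p)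
/-- `(y, y')` is a `V`-valued rough path controlled by `X = (x, ·)` (with control `ω`)
on the interval `[a, b]`. -/
def IsCRP (p : ℝ) {k : ℕ} (ω : ℝ → ℝ → ℝ) (x : ℝ → Euc k)
    {V : Type*} [NormedAddCommGroup V] [NormedSpace ℝ V]
    (a b : ℝ) (y : ℝ → V) (y' : ℝ → Euc k →L[ℝ] V) : Prop :=
  ContinuousOn y (Set.Icc a b) ∧ ContinuousOn y' (Set.Icc a b) ∧
    ∃ C : ℝ, ∀ ⦃s t : ℝ⦄, a ≤ s → s ≤ t → t ≤ b →
      ‖y t - y s - y' s (x t - x s)‖ ≤ C * ω s t ^ (2 / p) ∧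
      ‖y' t - y' s‖ ≤ C * ω s t ^ (1 / p)

lemma ctrl_mono {T : ℝ} {ω : ℝ → ℝ → ℝ} (hω : IsControl T ω) {a b c d : ℝ}
    (h0 : 0 ≤ a) (h1 : a ≤ b) (h2 : b ≤ c) (h3 : c ≤ d) (h4 : d ≤ T) : ω b c ≤ ω a d := by
  have e1 := hω.superadditive h0 h1 (h2.trans h3) h4
  have e2 := hω.superadditive (h0.trans h1) h2 h3 h4
  have e3 := hω.nonneg h0 h1 (by linarith)
  have e4 := hω.nonneg (s := c) (t := d) (by linarith) h3 h4
  linarith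

lemma ctrl_small {T : ℝ} {ω : ℝ → ℝ → ℝ} (hω : IsControl T ω) {ε : ℝ} (hε : 0 < ε) :
    ∃ δ > 0, ∀ s t : ℝ, 0 ≤ s → s ≤ t → t ≤ T → t - s < δ → ω s t < ε := by
  have hc : IsCompact {q : ℝ × ℝ | 0 ≤ q.1 ∧ q.1 ≤ q.2 ∧ q.2 ≤ T} := by
    apply IsCompact.of_isClosed_subset (isCompact_Icc (a := ((0:ℝ), (0:ℝ))) (b := (T, T)))
    · exact (isClosed_le continuous_const continuous_fst).inter
        ((isClosed_le continuous_fst continuous_snd).inter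
          (isClosed_le continuous_snd continuous_const))
    · rintro ⟨a, b⟩ ⟨h1, h2, h3⟩
      simp only at h1 h2 h3
      refine ⟨⟨h1, h1.trans h2⟩, ⟨h2.trans h3, h3⟩⟩
  have hu := hc.uniformContinuousOn_of_continuous hω.cont
  rw [Metric.uniformContinuousOn_iff] at hu
  obtain ⟨δ, hδ, h⟩ := hu ε hε
  refine ⟨δ, hδ, fun s t h0 h1 h2 h3 => ?_⟩
  have := h (s, t) ⟨h0, h1, h2⟩ (s, s) ⟨h0, le_refl _, h1.trans h2⟩ (by
    rw [Prod.dist_eq]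
    simp only [dist_self, Real.dist_eq]
    rw [abs_of_nonneg (by linarith)]
    exact max_lt hδ h3)
  simp only [hω.zero h0 (h1.trans h2), Real.dist_eq, sub_zero] at this
  exact (le_abs_self _).trans_lt this

lemma ctrl_sum {T : ℝ} {ω : ℝ → ℝ → ℝ} (hω : IsControl T ω) {a : ℕ → ℝ} (ha : Monotone a)
    (ha0 : ∀ n, 0 ≤ a n) (haT : ∀ n, a n ≤ T) (n : ℕ) :
    ∑ i ∈ Finset.range n, ω (a i) (a (i+1)) ≤ ω (a 0) (a n) := by
  induction n with
  | zero => simp [hω.zero (ha0 0) (haT 0)]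
  | succ n ih =>
    rw [Finset.sum_range_succ]
    have := hω.superadditive (ha0 0) (ha (Nat.zero_le n)) (ha (Nat.le_succ n)) (haT (n+1))
    simp only [Nat.succ_eq_add_one] at this
    linarith

lemma young {T θ C K : ℝ} {V : Type*} [NormedAddCommGroup V]
    {ω : ℝ → ℝ → ℝ} (hω : IsControl T ω) (hθ : 1 < θ) (hC : 0 ≤ C) (hK : 0 ≤ K)
    (hKC : 2 * (K * (1/2 : ℝ) ^ θ) + 2 * C ≤ K)
    {Ξ : ℝ → ℝ → V} (h0 : ∀ s, 0 ≤ s → s ≤ T → Ξ s s = 0)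
    (hδ : ∀ s u t, 0 ≤ s → s ≤ u → u ≤ t → t ≤ T →
      ‖Ξ s t - Ξ s u - Ξ u t‖ ≤ C * ω s t ^ θ)
    {a : ℕ → ℝ} (ha : Monotone a) (ha0 : ∀ n, 0 ≤ a n) (haT : ∀ n, a n ≤ T) (d : ℕ) :
    ∀ m n : ℕ, m ≤ n → n - m ≤ d →
      ‖∑ i ∈ Finset.Ico m n, Ξ (a i) (a (i+1)) - Ξ (a m) (a n)‖ ≤ K * ω (a m) (a n) ^ θ := by
  induction d with
  | zero =>
    intro m n h1 h2
    have : n = m := by omega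
    subst this
    have := hω.nonneg (ha0 n) le_rfl (haT n)
    simp only [Finset.Ico_self, Finset.sum_empty, h0 _ (ha0 n) (haT n), sub_zero, norm_zero]
    positivity
  | succ d ih =>
    intro m n h1 h2
    set w := ω (a m) (a n) with hw
    have hw0 : 0 ≤ w := hω.nonneg (ha0 m) (ha h1) (haT n)
    rcases h1.eq_or_lt with h | hmn
    · subst h
      simp only [Finset.Ico_self, Finset.sum_empty, h0 _ (ha0 m) (haT m), sub_zero, norm_zero]
      positivity
    obtain ⟨j, hmj, hjn, hj1, hj2⟩ : ∃ j, m ≤ j ∧ j < n ∧ ω (a m) (a j) ≤ w / 2 ∧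
        ω (a (j+1)) (a n) ≤ w / 2 := by
      classical
      let P : ℕ → Prop := fun j => m ≤ j ∧ j < n ∧ ω (a m) (a j) ≤ w / 2
      have hPm : P m := ⟨le_rfl, hmn, by rw [hω.zero (ha0 m) (haT m)]; positivity⟩
      have hP := Nat.findGreatest_spec (P := P) h1 hPm
      set j := Nat.findGreatest P n with hjdef
      refine ⟨j, hP.1, hP.2.1, hP.2.2, ?_⟩
      rcases (Nat.succ_le_of_lt hP.2.1).eq_or_lt with h | h
      · rw [← h]
        simp only [Nat.succ_eq_add_one]
        rw [hω.zero (ha0 _) (haT _)]; positivity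
      · have hn : ¬ P (j+1) := Nat.findGreatest_is_greatest (Nat.lt_succ_self j) h.le
        have hlt : w / 2 < ω (a m) (a (j+1)) := by
          by_contra hcon
          exact hn ⟨by have := hP.1; omega, h, not_lt.mp hcon⟩
        have := hω.superadditive (ha0 m) (ha (show m ≤ j+1 by have := hP.1; omega))
          (ha (show j + 1 ≤ n from h.le)) (haT n)
        linarith
    have e1 := ih m j hmj (by omega)
    have e2 := ih (j+1) n hjn (by omega)
    have hsum : ∑ i ∈ Finset.Ico m n, Ξ (a i) (a (i+1)) =
        ∑ i ∈ Finset.Ico m j, Ξ (a i) (a (i+1)) + Ξ (a j) (a (j+1)) +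
        ∑ i ∈ Finset.Ico (j+1) n, Ξ (a i) (a (i+1)) := by
      rw [← Finset.sum_Ico_succ_top hmj, Finset.sum_Ico_consecutive _ (by omega) (by omega)]
    have d1 := hδ (a m) (a j) (a n) (ha0 m) (ha hmj) (ha hjn.le) (haT n)
    have d2 := hδ (a j) (a (j+1)) (a n) (ha0 j) (ha (Nat.le_succ j)) (ha hjn) (haT n)
    have hθ0 : 0 ≤ θ := by linarith
    have b1 : ω (a j) (a n) ^ θ ≤ w ^ θ :=
      Real.rpow_le_rpow (hω.nonneg (ha0 j) (ha hjn.le) (haT n))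
        (ctrl_mono hω (ha0 m) (ha hmj) (ha hjn.le) le_rfl (haT n)) hθ0
    have half : (w / 2) ^ θ = (1/2:ℝ)^θ * w ^ θ := by
      rw [← Real.mul_rpow (by norm_num) hw0]; congr 1; ring
    have b2 : ω (a m) (a j) ^ θ ≤ (1/2:ℝ)^θ * w ^ θ := by
      rw [← half]
      exact Real.rpow_le_rpow (hω.nonneg (ha0 m) (ha hmj) (haT j)) hj1 hθ0
    have b3 : ω (a (j+1)) (a n) ^ θ ≤ (1/2:ℝ)^θ * w ^ θ := by
      rw [← half]
      exact Real.rpow_le_rpow (hω.nonneg (ha0 _) (ha hjn) (haT n)) hj2 hθ0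
    have hdec : ∑ i ∈ Finset.Ico m n, Ξ (a i) (a (i+1)) - Ξ (a m) (a n) =
        (∑ i ∈ Finset.Ico m j, Ξ (a i) (a (i+1)) - Ξ (a m) (a j)) +
        (∑ i ∈ Finset.Ico (j+1) n, Ξ (a i) (a (i+1)) - Ξ (a (j+1)) (a n)) -
        (Ξ (a m) (a n) - Ξ (a m) (a j) - Ξ (a j) (a n)) -
        (Ξ (a j) (a n) - Ξ (a j) (a (j+1)) - Ξ (a (j+1)) (a n)) := by
      rw [hsum]; abel
    rw [hdec]
    have n1 := norm_sub_le ((∑ i ∈ Finset.Ico m j, Ξ (a i) (a (i+1)) - Ξ (a m) (a j)) +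
        (∑ i ∈ Finset.Ico (j+1) n, Ξ (a i) (a (i+1)) - Ξ (a (j+1)) (a n)) -
        (Ξ (a m) (a n) - Ξ (a m) (a j) - Ξ (a j) (a n)))
        (Ξ (a j) (a n) - Ξ (a j) (a (j+1)) - Ξ (a (j+1)) (a n))
    have n2 := norm_sub_le ((∑ i ∈ Finset.Ico m j, Ξ (a i) (a (i+1)) - Ξ (a m) (a j)) +
        (∑ i ∈ Finset.Ico (j+1) n, Ξ (a i) (a (i+1)) - Ξ (a (j+1)) (a n)))
        (Ξ (a m) (a n) - Ξ (a m) (a j) - Ξ (a j) (a n))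
    have n3 := norm_add_le (∑ i ∈ Finset.Ico m j, Ξ (a i) (a (i+1)) - Ξ (a m) (a j))
        (∑ i ∈ Finset.Ico (j+1) n, Ξ (a i) (a (i+1)) - Ξ (a (j+1)) (a n))
    have c1 := mul_le_mul_of_nonneg_left b1 hC
    have c2 := mul_le_mul_of_nonneg_left b2 hK
    have c3 := mul_le_mul_of_nonneg_left b3 hK
    have c4 := mul_le_mul_of_nonneg_right hKC (Real.rpow_nonneg hw0 θ)
    nlinarith

lemma sum_blocks {V : Type*} [AddCommMonoid V] (f : ℕ → V) (N M : ℕ) :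
    ∑ k ∈ Finset.range N, ∑ i ∈ Finset.Ico (k * M) ((k+1) * M), f i =
      ∑ i ∈ Finset.range (N * M), f i := by
  induction N with
  | zero => simp
  | succ N ih =>
    rw [Finset.sum_range_succ, ih, Finset.range_eq_Ico, Finset.range_eq_Ico,
      Finset.sum_Ico_consecutive _ (Nat.zero_le _) (Nat.mul_le_mul_right _ (Nat.le_succ N))]

/-- dyadic grid stopped at `t` -/
def grid (T t : ℝ) (n k : ℕ) : ℝ := min t (k * (T / 2 ^ n))

lemma grid_mono {T : ℝ} (hT : 0 < T) (t : ℝ) (n : ℕ) : Monotone (grid T t n) := by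
  intro i j h
  unfold grid
  have : (i:ℝ) ≤ j := by exact_mod_cast h
  gcongr

lemma grid_nonneg {T : ℝ} (hT : 0 < T) {t : ℝ} (ht : 0 ≤ t) (n k : ℕ) : 0 ≤ grid T t n k :=
  le_min ht (by positivity)

lemma grid_le (T t : ℝ) (n k : ℕ) : grid T t n k ≤ t := min_le_left _ _

lemma grid_zero (T : ℝ) {t : ℝ} (ht : 0 ≤ t) (n : ℕ) : grid T t n 0 = 0 := by
  simp [grid, ht]

lemma grid_end {T t : ℝ} (ht : t ≤ T) (n : ℕ) : grid T t n (2^n) = t := by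
  unfold grid
  apply min_eq_left
  push_cast
  rwa [mul_div_cancel₀]
  positivity

lemma grid_step {T : ℝ} (hT : 0 < T) (t : ℝ) (n k : ℕ) :
    grid T t n (k+1) - grid T t n k ≤ T / 2 ^ n := by
  unfold grid
  have h : 0 ≤ T / 2^n := by positivity
  push_cast
  rw [add_mul, one_mul]
  rcases le_total t (k * (T / 2^n)) with h1 | h1
  · rw [min_eq_left h1, min_eq_left (by linarith)]; linarith
  · rw [min_eq_right h1]
    have := min_le_right t (k * (T / 2^n) + T / 2^n)
    linarith

lemma grid_refine (T t : ℝ) (n m k : ℕ) : grid T t (n + m) (k * 2^m) = grid T t n k := by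
  unfold grid
  congr 1
  push_cast
  rw [pow_add]
  field_simp

lemma err_tendsto {T θ : ℝ} (hT : 0 < T) {ω : ℝ → ℝ → ℝ} (hω : IsControl T ω) (hθ : 1 < θ)
    {t : ℝ} (ht : 0 ≤ t) (htT : t ≤ T) :
    Filter.Tendsto (fun n : ℕ => ∑ k ∈ Finset.range (2^n),
      ω (grid T t n k) (grid T t n (k+1)) ^ θ) Filter.atTop (nhds 0) := by
  have g0 := fun n k => grid_nonneg hT ht n k
  have gT := fun n k => (grid_le T t n k).trans htT
  have gm := fun n => grid_mono hT t n
  have hnn : ∀ n k, 0 ≤ ω (grid T t n k) (grid T t n (k+1)) := fun n k =>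
    hω.nonneg (g0 n k) (gm n (Nat.le_succ k)) (gT n _)
  rw [Metric.tendsto_atTop]
  intro ε hε
  have hw := hω.nonneg le_rfl ht htT
  set η := (ε / (ω 0 t + 1)) ^ (1 / (θ - 1)) with hη
  have hηpos : 0 < η := by positivity
  have hηpow : η ^ (θ - 1) = ε / (ω 0 t + 1) := by
    rw [hη, ← Real.rpow_mul (by positivity), one_div_mul_cancel (by linarith), Real.rpow_one]
  obtain ⟨δ, hδ, hs⟩ := ctrl_small hω hηpos
  have hlim : Filter.Tendsto (fun n : ℕ => T / 2^n) Filter.atTop (nhds 0) := by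
    have := (tendsto_pow_atTop_nhds_zero_of_lt_one (r := (1/2:ℝ)) (by norm_num)
      (by norm_num)).const_mul T
    simpa [div_eq_mul_inv] using this
  obtain ⟨N, hN⟩ := Filter.eventually_atTop.mp (hlim.eventually (gt_mem_nhds hδ))
  refine ⟨N, fun n hn => ?_⟩
  rw [Real.dist_eq, sub_zero, abs_of_nonneg (Finset.sum_nonneg fun k _ =>
    Real.rpow_nonneg (hnn n k) _)]
  calc _ ≤ ∑ k ∈ Finset.range (2^n), ω (grid T t n k) (grid T t n (k+1)) * η ^ (θ - 1) := by
        apply Finset.sum_le_sum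
        intro k _
        have h1 : ω (grid T t n k) (grid T t n (k+1)) ^ θ =
            ω (grid T t n k) (grid T t n (k+1)) * ω (grid T t n k) (grid T t n (k+1)) ^ (θ-1) := by
          conv_lhs => rw [show θ = 1 + (θ - 1) by ring,
            Real.rpow_add' (hnn n k) (by linarith), Real.rpow_one]
        rw [h1]
        apply mul_le_mul_of_nonneg_left _ (hnn n k)
        apply Real.rpow_le_rpow (hnn n k) _ (by linarith)
        exact (hs _ _ (g0 n k) (gm n (Nat.le_succ k)) (gT n _)
          ((grid_step hT t n k).trans_lt (hN n hn))).le
    _ ≤ ω 0 t * η ^ (θ - 1) := by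
        rw [← Finset.sum_mul]
        apply mul_le_mul_of_nonneg_right _ (by positivity)
        have := ctrl_sum hω (gm n) (g0 n) (gT n) (2^n)
        rwa [grid_zero T ht, grid_end htT] at this
    _ < ε := by
        rw [hηpow, mul_div_assoc', div_lt_iff₀ (by positivity)]
        nlinarith

lemma sewing {T θ C : ℝ} {V : Type*} [NormedAddCommGroup V] [CompleteSpace V]
    (hT : 0 < T) {ω : ℝ → ℝ → ℝ} (hω : IsControl T ω) (hθ : 1 < θ) (hC : 0 ≤ C)
    {Ξ : ℝ → ℝ → V} (h0 : ∀ s, 0 ≤ s → s ≤ T → Ξ s s = 0)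
    (hδ : ∀ s u t, 0 ≤ s → s ≤ u → u ≤ t → t ≤ T →
      ‖Ξ s t - Ξ s u - Ξ u t‖ ≤ C * ω s t ^ θ) :
    ∃ z : ℝ → V, z 0 = 0 ∧ ∃ K : ℝ, 0 ≤ K ∧ ∀ s t, 0 ≤ s → s ≤ t → t ≤ T →
      ‖z t - z s - Ξ s t‖ ≤ K * ω s t ^ θ := by
  obtain ⟨K, hK, hKC⟩ : ∃ K : ℝ, 0 ≤ K ∧ 2 * (K * (1/2 : ℝ) ^ θ) + 2 * C ≤ K := by
    have h : (1/2:ℝ)^θ < 1/2 := by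
      have := Real.rpow_lt_rpow_of_exponent_gt (x := (1/2:ℝ)) (by norm_num) (by norm_num) hθ
      simpa using this
    have h' : 0 < 1 - 2 * (1/2:ℝ)^θ := by linarith
    refine ⟨2 * C / (1 - 2 * (1/2:ℝ)^θ), by positivity, ?_⟩
    apply le_of_eq
    field_simp
    ring
  set S : ℝ → ℕ → V := fun t n => ∑ k ∈ Finset.range (2^n),
    Ξ (grid T t n k) (grid T t n (k+1)) with hS
  have hcauchy : ∀ t, 0 ≤ t → t ≤ T → ∃ l, Filter.Tendsto (S t) Filter.atTop (nhds l) := by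
    intro t ht htT
    apply cauchySeq_tendsto_of_complete
    have hE := (err_tendsto hT hω hθ ht htT).const_mul K
    rw [mul_zero] at hE
    rw [Metric.cauchySeq_iff']
    intro ε hε
    obtain ⟨N, hN⟩ := Filter.eventually_atTop.mp (hE.eventually (gt_mem_nhds hε))
    refine ⟨N, fun n hn => ?_⟩
    obtain ⟨m, rfl⟩ := Nat.exists_eq_add_of_le hn
    refine lt_of_le_of_lt ?_ (hN N le_rfl)
    rw [dist_eq_norm, hS]
    simp only
    rw [pow_add, ← sum_blocks, ← Finset.sum_sub_distrib, Finset.mul_sum]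
    apply norm_sum_le_of_le
    intro k _
    have := young hω hθ hC hK hKC h0 hδ (grid_mono hT t (N+m)) (grid_nonneg hT ht (N+m))
      (fun k => (grid_le T t (N+m) k).trans htT) _ (k * 2^m) ((k+1)*2^m)
      (Nat.mul_le_mul_right _ (Nat.le_succ k)) le_rfl
    rwa [grid_refine, grid_refine] at this
  choose! z hz using hcauchy
  refine ⟨z, ?_, K, hK, ?_⟩
  · refine tendsto_nhds_unique (hz 0 le_rfl hT.le) ?_
    have : S 0 = fun _ => 0 := by
      funext n
      apply Finset.sum_eq_zero
      intro k _
      have hg : ∀ k, grid T 0 n k = 0 := fun k =>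
        le_antisymm (grid_le _ _ _ _) (grid_nonneg hT le_rfl n k)
      rw [hg, hg, h0 0 le_rfl hT.le]
    rw [this]
    exact tendsto_const_nhds
  · intro s t hs hst htT
    have ht := hs.trans hst
    have hsT := hst.trans htT
    have hE := ((err_tendsto hT hω hθ ht htT).const_mul C).const_add (K * ω s t ^ θ)
    rw [mul_zero, add_zero] at hE
    have hL := (((hz t ht htT).sub (hz s hs hsT)).sub_const (Ξ s t)).norm
    refine le_of_tendsto_of_tendsto' hL hE fun n => ?_
    have hbm : Monotone (fun k => max s (grid T t n k)) := fun i j h =>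
      max_le_max le_rfl (grid_mono hT t n h)
    have y := young hω hθ hC hK hKC h0 hδ hbm (fun k => hs.trans (le_max_left _ _))
      (fun k => max_le hsT ((grid_le T t n k).trans htT)) _ 0 (2^n) (Nat.zero_le _) le_rfl
    simp only [grid_zero T ht, grid_end htT, max_eq_left hs, max_eq_right hst,
      ← Finset.range_eq_Ico] at y
    have hdec : S t n - S s n - Ξ s t =
        (∑ k ∈ Finset.range (2^n), Ξ (max s (grid T t n k)) (max s (grid T t n (k+1))) - Ξ s t)
        + ∑ k ∈ Finset.range (2^n), (Ξ (grid T t n k) (grid T t n (k+1))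
          - Ξ (grid T s n k) (grid T s n (k+1))
          - Ξ (max s (grid T t n k)) (max s (grid T t n (k+1)))) := by
      rw [Finset.sum_sub_distrib, Finset.sum_sub_distrib]
      simp only [hS]
      abel
    rw [hdec]
    refine (norm_add_le _ _).trans (add_le_add y ?_)
    rw [Finset.mul_sum]
    apply norm_sum_le_of_le
    intro k _
    have hmin : ∀ k, grid T s n k = min s (grid T t n k) := by
      intro k
      unfold grid
      rw [← min_assoc, min_eq_left hst]
    rw [hmin, hmin]
    have a0 := grid_nonneg hT ht n k
    have a1 := grid_mono hT t n (Nat.le_succ k)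
    have a2 := (grid_le T t n (k+1)).trans htT
    simp only [Nat.succ_eq_add_one] at a1
    set a := grid T t n k
    set b := grid T t n (k+1)
    have hnn := hω.nonneg a0 a1 a2
    rcases le_total b s with h | h
    · rw [min_eq_right h, min_eq_right (a1.trans h), max_eq_left h, max_eq_left (a1.trans h),
        h0 s hs hsT]
      simp only [sub_self, norm_zero]
      positivity
    rcases le_total s a with h' | h'
    · rw [min_eq_left h, min_eq_left h', max_eq_right h, max_eq_right h',
        h0 s hs hsT]
      simp only [sub_self, sub_zero, norm_zero]
      positivity
    · rw [min_eq_left h, min_eq_right h', max_eq_right h, max_eq_left h']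
      exact hδ a s b a0 h' h a2

lemma tapply_tensorE {k : ℕ} {V : Type*} [NormedAddCommGroup V] [NormedSpace ℝ V]
    (B : Euc k →L[ℝ] Euc k →L[ℝ] V) (v w : Euc k) :
    tapply (fun v w => B v w) (tensorE v w) = B v w := by
  have hv : ∀ v : Euc k, v = ∑ i, v i • eb i := by
    intro v
    have := (EuclideanSpace.basisFun (Fin k) ℝ).sum_repr v
    simpa [eb] using this.symm
  conv_rhs => rw [hv v, hv w]
  simp only [map_sum, map_smul, sum_apply, smul_apply]
  unfold tapply tensorE
  rw [Fintype.sum_prod_type]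
  simp [Finset.smul_sum, smul_smul, mul_comm]
  exact Finset.sum_comm

lemma tapply_add {k : ℕ} {V : Type*} [NormedAddCommGroup V] [NormedSpace ℝ V]
    (B : Euc k → Euc k → V) (X Y : EuclideanSpace ℝ (Fin k × Fin k)) :
    tapply B (X + Y) = tapply B X + tapply B Y := by
  simp [tapply, add_smul, Finset.sum_add_distrib]

lemma tapply_sub_left {k : ℕ} {V : Type*} [NormedAddCommGroup V] [NormedSpace ℝ V]
    (A B : Euc k →L[ℝ] Euc k →L[ℝ] V) (X : EuclideanSpace ℝ (Fin k × Fin k)) :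
    tapply (fun v w => (A - B) v w) X =
      tapply (fun v w => A v w) X - tapply (fun v w => B v w) X := by
  simp [tapply, smul_sub, Finset.sum_sub_distrib]

lemma tapply_norm {k : ℕ} {V : Type*} [NormedAddCommGroup V] [NormedSpace ℝ V]
    (B : Euc k →L[ℝ] Euc k →L[ℝ] V) (X : EuclideanSpace ℝ (Fin k × Fin k)) :
    ‖tapply (fun v w => B v w) X‖ ≤ (k * k : ℝ) * (‖B‖ * ‖X‖) := by
  have he : ∀ i : Fin k, ‖(eb i : Euc k)‖ = 1 := fun i => by simp [eb]
  unfold tapply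
  refine (norm_sum_le_of_le (f := fun q : Fin k × Fin k => X q • B (eb q.1) (eb q.2))
    (n := fun _ => ‖B‖ * ‖X‖) _ ?_).trans ?_
  · intro q _
    rw [norm_smul, mul_comm]
    refine mul_le_mul ?_ (PiLp.norm_apply_le X q) (norm_nonneg _) (ContinuousLinearMap.opNorm_nonneg B)
    have := B.le_opNorm₂ (eb q.1) (eb q.2)
    rwa [he, he, mul_one, mul_one] at this
  · simp

/-- **Existence of the rough integral of a controlled path against a rough path.**
If `(y, y')` is an `L(W,V)`-valued rough path controlled by `X = (x, XX)`, then there is a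
continuous `z : [0,T] → V` with `z 0 = 0` such that
`z_t − z_s − y_s x_{s,t} − y'_s 𝕏_{s,t} = O(ω(s,t)^{3/p})`. -/
theorem exists_rough_integral
    {T p : ℝ} (hT : 0 < T) (hp1 : 1 ≤ p) (hp3 : p < 3) {k : ℕ} (hk : 1 ≤ k)
    {ω : ℝ → ℝ → ℝ} (hω : IsControl T ω)
    {x : ℝ → Euc k} {XX : ℝ → ℝ → EuclideanSpace ℝ (Fin k × Fin k)}
    (hX : IsRoughPath T p ω x XX)
    {V : Type*} [NormedAddCommGroup V] [NormedSpace ℝ V] [CompleteSpace V]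
    {y : ℝ → Euc k →L[ℝ] V} {y' : ℝ → Euc k →L[ℝ] Euc k →L[ℝ] V}
    (hy : IsCRP p ω x 0 T y y') :
    ∃ z : ℝ → V, ContinuousOn z (Set.Icc 0 T) ∧ z 0 = 0 ∧
      ∃ C : ℝ, 0 ≤ C ∧ ∀ ⦃s t : ℝ⦄, 0 ≤ s → s ≤ t → t ≤ T →
        ‖z t - z s - y s (x t - x s) - tapply (fun v w => y' s v w) (XX s t)‖
          ≤ C * ω s t ^ (3 / p) := by
  obtain ⟨hyc, hy'c, C, hCb⟩ := hy
  set c : ℝ := |C| with hc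
  have hc0 : 0 ≤ c := abs_nonneg C
  have hp0 : 0 < p := by linarith
  have hb1 : ∀ s t, 0 ≤ s → s ≤ t → t ≤ T →
      ‖y t - y s - y' s (x t - x s)‖ ≤ c * ω s t ^ (2 / p) := fun s t h1 h2 h3 =>
    (hCb h1 h2 h3).1.trans (mul_le_mul_of_nonneg_right (le_abs_self C)
      (Real.rpow_nonneg (hω.nonneg h1 h2 h3) _))
  have hb2 : ∀ s t, 0 ≤ s → s ≤ t → t ≤ T →
      ‖y' t - y' s‖ ≤ c * ω s t ^ (1 / p) := fun s t h1 h2 h3 =>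
    (hCb h1 h2 h3).2.trans (mul_le_mul_of_nonneg_right (le_abs_self C)
      (Real.rpow_nonneg (hω.nonneg h1 h2 h3) _))
  set Ξ : ℝ → ℝ → V := fun s t =>
    y s (x t - x s) + tapply (fun v w => y' s v w) (XX s t) with hΞ
  have h2p : 0 < 2 / p := by positivity
  have h1p : 0 < 1 / p := by positivity
  have hXX0 : ∀ s, 0 ≤ s → s ≤ T → XX s s = 0 := by
    intro s h1 h2
    have := hX.bound_XX h1 le_rfl h2
    rw [hω.zero h1 h2, Real.zero_rpow h2p.ne'] at this
    exact norm_le_zero_iff.mp this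
  have hΞ0 : ∀ s, 0 ≤ s → s ≤ T → Ξ s s = 0 := by
    intro s h1 h2
    simp [hΞ, hXX0 s h1 h2, tapply]
  have hθ : 1 < 3 / p := by rw [lt_div_iff₀ hp0]; linarith
  have hδ : ∀ s u t, 0 ≤ s → s ≤ u → u ≤ t → t ≤ T →
      ‖Ξ s t - Ξ s u - Ξ u t‖ ≤ (c + k * k * c) * ω s t ^ (3 / p) := by
    intro s u t h1 h2 h3 h4
    have hch := hX.chen h1 h2 h3 h4
    have hid : Ξ s t - Ξ s u - Ξ u t =
        -((y u - y s - y' s (x u - x s)) (x t - x u))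
        - tapply (fun v w => (y' u - y' s) v w) (XX u t) := by
      simp only [hΞ]
      rw [hch, tapply_add, tapply_add, tapply_tensorE, tapply_sub_left]
      rw [show x t - x s = (x u - x s) + (x t - x u) by abel, map_add]
      simp only [sub_apply]
      abel
    have w1 := hω.nonneg h1 h2 (h3.trans h4)
    have w2 := hω.nonneg (h1.trans h2) h3 h4
    have w := hω.nonneg h1 (h2.trans h3) h4
    have m1 : ω s u ≤ ω s t := ctrl_mono hω h1 le_rfl h2 h3 h4
    have m2 : ω u t ≤ ω s t := ctrl_mono hω h1 h2 h3 le_rfl h4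
    have e12 : ω s t ^ (3 / p) = ω s t ^ (2 / p) * ω s t ^ (1 / p) := by
      rw [← Real.rpow_add' w (by positivity)]; congr 1; ring
    have e21 : ω s t ^ (3 / p) = ω s t ^ (1 / p) * ω s t ^ (2 / p) := by
      rw [e12, mul_comm]
    rw [hid]
    refine (norm_sub_le _ _).trans ?_
    rw [norm_neg, add_mul]
    apply add_le_add
    · refine (ContinuousLinearMap.le_opNorm _ _).trans ?_
      calc _ ≤ (c * ω s u ^ (2 / p)) * ω u t ^ (1 / p) :=
            mul_le_mul (hb1 s u h1 h2 (h3.trans h4)) (hX.bound_x (h1.trans h2) h3 h4)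
              (norm_nonneg _) (by positivity)
        _ ≤ (c * ω s t ^ (2 / p)) * ω s t ^ (1 / p) := by gcongr
        _ = _ := by rw [e12]; ring
    · refine (tapply_norm _ _).trans ?_
      calc _ ≤ (k * k : ℝ) * ((c * ω s u ^ (1 / p)) * ω u t ^ (2 / p)) := by
            apply mul_le_mul_of_nonneg_left _ (by positivity)
            exact mul_le_mul (hb2 s u h1 h2 (h3.trans h4)) (hX.bound_XX (h1.trans h2) h3 h4)
              (norm_nonneg _) (by positivity)
        _ ≤ (k * k : ℝ) * ((c * ω s t ^ (1 / p)) * ω s t ^ (2 / p)) := by gcongr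
        _ = _ := by rw [e21]; ring
  obtain ⟨z, hz0, K, hK, hz⟩ := sewing hT hω hθ (by positivity) hΞ0 hδ
  refine ⟨z, ?_, hz0, K, hK, fun s t h1 h2 h3 => ?_⟩
  · obtain ⟨M, hM⟩ := isCompact_Icc.exists_bound_of_continuousOn hyc
    obtain ⟨M', hM'⟩ := isCompact_Icc.exists_bound_of_continuousOn hy'c
    have hG : ∀ s t, 0 ≤ s → s ≤ t → t ≤ T → ‖z t - z s‖ ≤
        K * ω s t ^ (3 / p) + M * ω s t ^ (1 / p) + k * k * (M' * ω s t ^ (2 / p)) := by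
      intro s t h1 h2 h3
      have hs : s ∈ Set.Icc 0 T := ⟨h1, h2.trans h3⟩
      have hM0 := (norm_nonneg _).trans (hM s hs)
      have hM0' := (norm_nonneg _).trans (hM' s hs)
      have e : z t - z s = (z t - z s - Ξ s t) + y s (x t - x s)
          + tapply (fun v w => y' s v w) (XX s t) := by simp only [hΞ]; abel
      rw [e]
      refine (norm_add₃_le).trans (add_le_add (add_le_add (hz s t h1 h2 h3) ?_) ?_)
      · exact (ContinuousLinearMap.le_opNorm _ _).trans
          (mul_le_mul (hM s hs) (hX.bound_x h1 h2 h3) (norm_nonneg _) hM0)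
      · refine (tapply_norm _ _).trans (mul_le_mul_of_nonneg_left ?_ (by positivity))
        exact mul_le_mul (hM' s hs) (hX.bound_XX h1 h2 h3) (norm_nonneg _) hM0'
    have hlim : Filter.Tendsto (fun r : ℝ =>
        K * r ^ (3 / p) + M * r ^ (1 / p) + k * k * (M' * r ^ (2 / p))) (nhds 0) (nhds 0) := by
      have : Continuous (fun r : ℝ =>
        K * r ^ (3 / p) + M * r ^ (1 / p) + k * k * (M' * r ^ (2 / p))) := by
        have q1 := Real.continuous_rpow_const (q := 3 / p) (by positivity)
        have q2 := Real.continuous_rpow_const (q := 2 / p) h2p.le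
        have q3 := Real.continuous_rpow_const (q := 1 / p) h1p.le
        fun_prop
      have h := this.tendsto 0
      rwa [Real.zero_rpow (by positivity), Real.zero_rpow h1p.ne', Real.zero_rpow h2p.ne',
        mul_zero, mul_zero, mul_zero, mul_zero, add_zero, add_zero] at h
    rw [Metric.continuousOn_iff]
    intro b hb ε hε
    obtain ⟨η, hη, hηb⟩ := Metric.tendsto_nhds_nhds.mp hlim ε hε
    obtain ⟨δ, hδ0, hδb⟩ := ctrl_small hω hη
    have key : ∀ s t, 0 ≤ s → s ≤ t → t ≤ T → t - s < δ → ‖z t - z s‖ < ε := by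
      intro s t h1 h2 h3 h4
      refine (hG s t h1 h2 h3).trans_lt ?_
      have hw := hω.nonneg h1 h2 h3
      have := @hηb (ω s t) (by
        rw [Real.dist_eq, sub_zero, abs_of_nonneg hw]; exact hδb s t h1 h2 h3 h4)
      rw [Real.dist_eq, sub_zero] at this
      exact (le_abs_self _).trans_lt this
    refine ⟨δ, hδ0, fun a ha hab => ?_⟩
    rw [Real.dist_eq] at hab
    rw [dist_eq_norm]
    rcases le_total a b with h | h
    · rw [norm_sub_rev]
      exact key a b ha.1 h hb.2 (by rw [abs_sub_comm] at hab; exact (le_abs_self _).trans_lt hab)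
    · exact key b a hb.1 h ha.2 ((le_abs_self _).trans_lt hab)
  · rw [sub_sub]
    exact hz s t h1 h2 h3
end
end

section
/- For a parallelism on ℝ^d, U(n,m)⁻¹ agrees with U(m,n) to second order: Let D ⊆ ℝ^d × ℝ^d be an open set containing the diagonal {(x,x) : x ∈ ℝ^d}, and let U : D → End(ℝ^d) be smooth with U(x,x) = I for all x. Then for every x₀ ∈ ℝ^d there exist r > 0 and C < ∞ such that for all m, n in the open ball B_r(x₀): (m,n) and (n,m) lie in D, U(n,m) is invertible, and ‖U(n,m)⁻¹ − U(m,n)‖ ≤ C |n − m|². -/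
noncomputable section

open scoped BigOperators

/-- **A parallelism and its pointwise-swapped inverse agree to second order.**
If `U` is a smooth `End(ℝ^d)`-valued map on an open neighborhood `D` of the diagonal with
`U(x,x) = I`, then locally `U(n,m)` is invertible and `‖U(n,m)⁻¹ − U(m,n)‖ = O(|n − m|²)`. -/
theorem parallelism_inverse_second_order
    {d : ℕ} {D : Set (Euc d × Euc d)} (hD : IsOpen D)
    (hdiag : ∀ x : Euc d, (x, x) ∈ D)
    {U : Euc d × Euc d → Euc d →L[ℝ] Euc d} (hU : ContDiffOn ℝ (⊤ : ℕ∞) U D)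
    (hUdiag : ∀ x : Euc d, U (x, x) = ContinuousLinearMap.id ℝ (Euc d)) :
    ∀ x₀ : Euc d, ∃ r C : ℝ, 0 < r ∧
      ∀ m ∈ Metric.ball x₀ r, ∀ n ∈ Metric.ball x₀ r,
        (m, n) ∈ D ∧ (n, m) ∈ D ∧ IsUnit (U (n, m)) ∧
        ‖Ring.inverse (U (n, m)) - U (m, n)‖ ≤ C * ‖n - m‖ ^ 2 := by
  intro x₀
  have hdx : D ∈ nhds (x₀, x₀) := hD.mem_nhds (hdiag x₀)
  have hc : ContDiffAt ℝ (⊤ : ℕ∞) U (x₀, x₀) := hU.contDiffAt hdx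
  obtain ⟨L, s, hs, hL⟩ := (hc.of_le (m := 1) (by exact_mod_cast le_top)).exists_lipschitzOnWith
  obtain ⟨K, t, ht, hK⟩ := (hc.fderiv_right (m := 1)
    (WithTop.coe_le_coe.2 (le_top : (1 + 1 : ℕ∞) ≤ ⊤))).exists_lipschitzOnWith
  have h1 : U (x₀, x₀) = 1 := hUdiag x₀
  have hinv : ∀ᶠ p in nhds (x₀, x₀), ‖Ring.inverse (U p)‖ < ‖(1 : Euc d →L[ℝ] Euc d)‖ + 1 := by
    have hci : ContinuousAt (fun p => ‖Ring.inverse (U p)‖) (x₀, x₀) := by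
      refine ContinuousAt.norm ?_
      refine ContinuousAt.comp (g := Ring.inverse) ?_ hc.continuousAt
      rw [h1]
      exact NormedRing.inverse_continuousAt (1 : (Euc d →L[ℝ] Euc d)ˣ)
    refine hci.eventually_lt continuousAt_const ?_
    simp [h1]
  have hunit : ∀ᶠ p in nhds (x₀, x₀), IsUnit (U p) := by
    refine hc.continuousAt.eventually (p := fun a => IsUnit a) ?_
    rw [h1]
    exact Units.isOpen.mem_nhds isUnit_one
  obtain ⟨r, hr, hball⟩ := Metric.eventually_nhds_iff_ball.1
    ((Filter.eventually_of_mem hdx (fun _ h => h)).and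
      ((Filter.eventually_of_mem hs (fun _ h => h)).and
      ((Filter.eventually_of_mem ht (fun _ h => h)).and (hinv.and hunit))))
  set M := ‖(1 : Euc d →L[ℝ] Euc d)‖ + 1 with hM
  refine ⟨r, M * (K + L * L), hr, ?_⟩
  have hb : ∀ a ∈ Metric.ball x₀ r, ∀ b ∈ Metric.ball x₀ r,
      (a, b) ∈ D ∧ (a, b) ∈ s ∧ (a, b) ∈ t ∧ ‖Ring.inverse (U (a, b))‖ < M ∧ IsUnit (U (a, b)) := by
    intro a ha b hb
    refine hball (a, b) ?_
    rw [← ball_prod_same]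
    exact ⟨ha, hb⟩
  intro m hm n hn
  obtain ⟨hD1, hs1, ht1, hi1, hu1⟩ := hb m hm n hn
  obtain ⟨hD2, hs2, ht2, hi2, hu2⟩ := hb n hn m hm
  refine ⟨hD1, hD2, hu2, ?_⟩
  have key : ‖(U (n, n) - U (n, m)) - (U (m, n) - U (m, m))‖ ≤ (K * ‖n - m‖) * ‖n - m‖ := by
    refine Convex.norm_image_sub_le_of_norm_hasFDerivWithin_le
      (f := fun x => U (x, n) - U (x, m)) (s := Metric.ball x₀ r)
      (f' := fun x => (fderiv ℝ U (x, n) - fderiv ℝ U (x, m)).comp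
        (ContinuousLinearMap.inl ℝ (Euc d) (Euc d))) ?_ ?_ (convex_ball _ _) hm hn
    · intro x hx
      have aux : ∀ y ∈ Metric.ball x₀ r, HasFDerivAt (fun x => U (x, y))
          ((fderiv ℝ U (x, y)).comp (ContinuousLinearMap.inl ℝ (Euc d) (Euc d))) x := by
        intro y hy
        have hdU : DifferentiableAt ℝ U (x, y) :=
          (hU.contDiffAt (hD.mem_nhds (hb x hx y hy).1)).differentiableAt (by simp)
        exact HasFDerivAt.comp (g := U) x hdU.hasFDerivAt (hasFDerivAt_prodMk_left x y)
      rw [ContinuousLinearMap.sub_comp]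
      exact ((aux n hn).sub (aux m hm)).hasFDerivWithinAt
    · intro x hx
      refine (ContinuousLinearMap.opNorm_comp_le _ _).trans ?_
      have e1 := hK.norm_sub_le (hb x hx n hn).2.2.1 (hb x hx m hm).2.2.1
      have e2 : ‖((x, n) : Euc d × Euc d) - (x, m)‖ = ‖n - m‖ := by
        simp [Prod.norm_def]
      rw [e2] at e1
      have e3 := ContinuousLinearMap.norm_inl_le_one ℝ (Euc d) (Euc d)
      calc _ ≤ (K * ‖n - m‖) * 1 := by gcongr
        _ = _ := mul_one _
  have hA : ‖U (n, m) - 1‖ ≤ L * ‖n - m‖ := by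
    have e1 := hL.norm_sub_le hs2 (hb m hm m hm).2.1
    have e2 : ‖((n, m) : Euc d × Euc d) - (m, m)‖ = ‖n - m‖ := by
      simp [Prod.norm_def]
    rw [e2, hUdiag m] at e1
    exact e1
  have hB : ‖U (m, n) - 1‖ ≤ L * ‖n - m‖ := by
    have e1 := hL.norm_sub_le hs1 (hb m hm m hm).2.1
    have e2 : ‖((m, n) : Euc d × Euc d) - (m, m)‖ = ‖n - m‖ := by
      simp [Prod.norm_def]
    rw [e2, hUdiag m] at e1
    exact e1
  have e0 : ∀ x, U (x, x) = 1 := hUdiag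
  rw [e0, e0] at key
  have hid : Ring.inverse (U (n, m)) - U (m, n) = Ring.inverse (U (n, m)) *
      (((1 - U (n, m)) - (U (m, n) - 1)) - (U (n, m) - 1) * (U (m, n) - 1)) := by
    have e : ((1 - U (n, m)) - (U (m, n) - 1)) - (U (n, m) - 1) * (U (m, n) - 1)
        = 1 - U (n, m) * U (m, n) := by
      simp only [mul_sub, sub_mul, mul_one, one_mul]; abel
    rw [e, mul_sub, mul_one, ← mul_assoc, Ring.inverse_mul_cancel _ hu2, one_mul]
  rw [hid]
  calc _ ≤ ‖Ring.inverse (U (n, m))‖ *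
      ‖((1 - U (n, m)) - (U (m, n) - 1)) - (U (n, m) - 1) * (U (m, n) - 1)‖ := norm_mul_le _ _
    _ ≤ M * ((K * ‖n - m‖) * ‖n - m‖ + (L * ‖n - m‖) * (L * ‖n - m‖)) := by
      gcongr
      refine (norm_sub_le _ _).trans ?_
      refine add_le_add key ((norm_mul_le _ _).trans ?_)
      gcongr
    _ = _ := by ring
end
end

section
/- Euclidean equivalence of the controlled-rough-path definition and the gauge definition: Let X = (x, 𝕏) be a weak-geometric p-rough path with control ω on [0,T], let (ψ, U) be a local gauge on ℝ^d with open domain D, let [a,b] ⊆ [0,T], let z : [a,b] → ℝ^d and z† : [a,b] → L(W, ℝ^d) be continuous, and let W₀ ⊆ ℝ^d be an open convex set with z([a,b]) ⊆ W₀ and W₀ × W₀ ⊆ D. Then the following are equivalent: (1) there exists C < ∞ with |z_t − z_s − z_s† x_{s,t}| ≤ C ω(s,t)^{2/p} and ‖z_t† − z_s†‖ ≤ C ω(s,t)^{1/p} for all a ≤ s ≤ t ≤ b; (2) there exists C < ∞ with |ψ(z_s, z_t) − z_s† x_{s,t}| ≤ C ω(s,t)^{2/p} and ‖U(z_s, z_t)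 ∘ z_t† − z_s†‖ ≤ C ω(s,t)^{1/p} for all a ≤ s ≤ t ≤ b. -/
noncomputable section

open scoped BigOperators

/-- The rough path `(x, XX)` is weak-geometric: the symmetric part of `XX s t` is
`(1/2) x_{s,t} ⊗ x_{s,t}`. -/
def IsWeakGeometric (T : ℝ) {k : ℕ} (x : ℝ → Euc k)
    (XX : ℝ → ℝ → EuclideanSpace ℝ (Fin k × Fin k)) : Prop :=
  ∀ ⦃s t : ℝ⦄, 0 ≤ s → s ≤ t → t ≤ T → ∀ i j : Fin k,
    XX s t (i, j) + XX s t (j, i) = (x t - x s) i * (x t - x s) j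
/-- `(ψ, U)` is a local gauge on `ℝ^d` with open domain `D`. -/
structure IsLocalGauge {d : ℕ} (D : Set (Euc d × Euc d))
    (ψ : Euc d × Euc d → Euc d) (U : Euc d × Euc d → Euc d →L[ℝ] Euc d) : Prop where
  open_dom : IsOpen D
  smooth_psi : ContDiffOn ℝ (⊤ : ℕ∞) ψ D
  smooth_U : ContDiffOn ℝ (⊤ : ℕ∞) U D
  diag_psi : ∀ x : Euc d, (x, x) ∈ D → ψ (x, x) = 0
  diag_dpsi : ∀ x : Euc d, (x, x) ∈ D →
    fderiv ℝ (fun w => ψ (x, w)) x = ContinuousLinearMap.id ℝ (Euc d)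
  diag_U : ∀ x : Euc d, (x, x) ∈ D → U (x, x) = ContinuousLinearMap.id ℝ (Euc d)

lemma aux_lip {E F : Type*} [NormedAddCommGroup E] [NormedSpace ℝ E]
    [NormedAddCommGroup F] [NormedSpace ℝ F] {D K : Set E} (hD : IsOpen D) {f : E → F}
    (hf : ContDiffOn ℝ 1 f D) (hK : IsCompact K) (hKc : Convex ℝ K) (hKD : K ⊆ D) :
    ∃ M : ℝ, 0 ≤ M ∧ ∀ x ∈ K, ∀ y ∈ K, ‖f y - f x‖ ≤ M * ‖y - x‖ := by
  have hc : ContinuousOn (fderiv ℝ f) D := hf.continuousOn_fderiv_of_isOpen hD le_rfl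
  obtain ⟨M, hM⟩ := hK.exists_bound_of_continuousOn (hc.mono hKD)
  refine ⟨max M 0, le_max_right _ _, fun x hx y hy => ?_⟩
  refine hKc.norm_image_sub_le_of_norm_fderiv_le (𝕜 := ℝ) (fun w hw => ?_)
    (fun w hw => (hM w hw).trans (le_max_left _ _)) hx hy
  exact (hf.differentiableOn one_ne_zero).differentiableAt (hD.mem_nhds (hKD hw))

lemma aux_gauge {d : ℕ} {D : Set (Euc d × Euc d)}
    {ψ : Euc d × Euc d → Euc d} {U : Euc d × Euc d → Euc d →L[ℝ] Euc d}
    (hG : IsLocalGauge D ψ U) {K : Set (Euc d)} (hK : IsCompact K) (hKc : Convex ℝ K)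
    (hKD : K ×ˢ K ⊆ D) :
    ∃ M : ℝ, 0 ≤ M ∧ ∀ x ∈ K, ∀ y ∈ K, ‖ψ (x, y) - (y - x)‖ ≤ M * ‖y - x‖ ^ 2 ∧
      ‖U (x, y) - ContinuousLinearMap.id ℝ (Euc d)‖ ≤ M * ‖y - x‖ := by
  have hU1 : ContDiffOn ℝ 1 U D := hG.smooth_U.of_le (by exact_mod_cast le_top)
  have hψ1 : ContDiffOn ℝ 1 (fderiv ℝ ψ) D :=
    (hG.smooth_psi.of_le (m := 2) (by norm_cast)).fderiv_of_isOpen hG.open_dom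
      (by norm_num)
  have hψd : ∀ q ∈ D, HasFDerivAt ψ (fderiv ℝ ψ q) q := fun q hq =>
    ((hG.smooth_psi.differentiableOn (by simp)).differentiableAt
      (hG.open_dom.mem_nhds hq)).hasFDerivAt
  obtain ⟨M₁, hM₁, h₁⟩ := aux_lip hG.open_dom hU1 (hK.prod hK) (hKc.prod hKc) hKD
  obtain ⟨M₂, hM₂, h₂⟩ := aux_lip hG.open_dom hψ1 (hK.prod hK) (hKc.prod hKc) hKD
  have hn : ∀ x w : Euc d, ‖((x, w) : Euc d × Euc d) - (x, x)‖ = ‖w - x‖ := by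
    intro x w
    simp [Prod.norm_def]
  refine ⟨max M₁ M₂, hM₁.trans (le_max_left _ _), fun x hx y hy => ⟨?_, ?_⟩⟩
  · have hxx : (x, x) ∈ D := hKD ⟨hx, hx⟩
    set A := ContinuousLinearMap.inr ℝ (Euc d) (Euc d) with hA
    have hder : ∀ w ∈ K, HasFDerivAt (fun w => ψ (x, w)) ((fderiv ℝ ψ (x, w)).comp A) w := by
      intro w hw
      exact (hψd (x, w) (hKD ⟨hx, hw⟩)).comp w (hasFDerivAt_prodMk_right x w)
    have hI : (fderiv ℝ ψ (x, x)).comp A = ContinuousLinearMap.id ℝ (Euc d) := by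
      rw [← hG.diag_dpsi x hxx]
      exact (hder x hx).fderiv.symm
    have hAn : ‖A‖ ≤ 1 := ContinuousLinearMap.norm_inr_le_one ℝ (Euc d) (Euc d)
    have hseg : segment ℝ x y ⊆ K := hKc.segment_subset hx hy
    have key := (convex_segment x y).norm_image_sub_le_of_norm_hasFDerivWithin_le (𝕜 := ℝ)
      (f := fun w => ψ (x, w) - w)
      (f' := fun w => (fderiv ℝ ψ (x, w)).comp A - ContinuousLinearMap.id ℝ (Euc d))
      (C := M₂ * ‖y - x‖)
      (fun w hw => ((hder w (hseg hw)).sub (hasFDerivAt_id w)).hasFDerivWithinAt)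
      (fun w hw => by
        rw [← hI, ← ContinuousLinearMap.sub_comp]
        calc _ ≤ ‖fderiv ℝ ψ (x, w) - fderiv ℝ ψ (x, x)‖ * ‖A‖ :=
              ContinuousLinearMap.opNorm_comp_le _ _
          _ ≤ ‖fderiv ℝ ψ (x, w) - fderiv ℝ ψ (x, x)‖ * 1 := by gcongr
          _ ≤ M₂ * ‖w - x‖ := by
              rw [mul_one, ← hn]; exact h₂ _ ⟨hx, hx⟩ _ ⟨hx, hseg hw⟩
          _ ≤ M₂ * ‖y - x‖ := by
              gcongr; exact norm_sub_le_of_mem_segment hw)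
      (left_mem_segment ℝ x y) (right_mem_segment ℝ x y)
    simp only [hG.diag_psi x hxx] at key
    have e : ψ (x, y) - y - (0 - x) = ψ (x, y) - (y - x) := by abel
    rw [e] at key
    calc _ ≤ _ := key
      _ = M₂ * ‖y - x‖ ^ 2 := by ring
      _ ≤ _ := by gcongr; exact le_max_right _ _
  · have := h₁ (x, x) ⟨hx, hx⟩ (x, y) ⟨hx, hy⟩
    rw [hG.diag_U x (hKD ⟨hx, hx⟩), hn] at this
    exact this.trans (by gcongr; exact le_max_left _ _)

/-- local-to-global patching -/
lemma aux_patch {E F : Type*} [NormedAddCommGroup E] [NormedSpace ℝ E]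
    [NormedAddCommGroup F] [NormedSpace ℝ F] {a b δ C : ℝ} (hδ : 0 < δ) (hC : 0 ≤ C)
    {x : ℝ → E} {z : ℝ → F} {z' : ℝ → E →L[ℝ] F} {ρ : ℝ → ℝ → ℝ}
    (hρ0 : ∀ s t, a ≤ s → s ≤ t → t ≤ b → 0 ≤ ρ s t)
    (hρl : ∀ s u t, a ≤ s → s ≤ u → u ≤ t → t ≤ b → ρ s u ≤ ρ s t)
    (hρr : ∀ s u t, a ≤ s → s ≤ u → u ≤ t → t ≤ b → ρ u t ≤ ρ s t)
    (hx : ∀ s t, a ≤ s → s ≤ t → t ≤ b → ‖x t - x s‖ ≤ ρ s t)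
    (h : ∀ s t, a ≤ s → s ≤ t → t ≤ b → t - s ≤ δ →
      ‖z t - z s - z' s (x t - x s)‖ ≤ C * ρ s t ^ 2 ∧ ‖z' t - z' s‖ ≤ C * ρ s t) (n : ℕ) :
    ∃ C' : ℝ, 0 ≤ C' ∧ ∀ s t, a ≤ s → s ≤ t → t ≤ b → t - s ≤ (n + 1) * δ →
      ‖z t - z s - z' s (x t - x s)‖ ≤ C' * ρ s t ^ 2 ∧ ‖z' t - z' s‖ ≤ C' * ρ s t := by
  induction n with
  | zero => exact ⟨C, hC, by simpa using h⟩
  | succ n ih =>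
    obtain ⟨C', hC', ih⟩ := ih
    refine ⟨C' + C + C', by positivity, fun s t has hst htb hd => ?_⟩
    push_cast at hd
    obtain ⟨u, hsu, hut, h1, h2⟩ : ∃ u, s ≤ u ∧ u ≤ t ∧ u - s ≤ (n + 1) * δ ∧ t - u ≤ δ := by
      refine ⟨max s (t - δ), le_max_left _ _, max_le hst (by linarith), ?_, ?_⟩
      · have : max s (t - δ) ≤ s + (n + 1) * δ := max_le (by nlinarith [hδ.le, (Nat.cast_nonneg n : (0:ℝ) ≤ n), mul_nonneg (Nat.cast_nonneg n : (0:ℝ) ≤ n) hδ.le]) (by nlinarith)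
        linarith
      · linarith [le_max_right s (t - δ)]
    obtain ⟨p1, p2⟩ := ih s u has hsu (hut.trans htb) h1
    obtain ⟨q1, q2⟩ := h u t (has.trans hsu) hut htb h2
    have r0 := hρ0 s u has hsu (hut.trans htb)
    have r1 := hρ0 u t (has.trans hsu) hut htb
    have r := hρ0 s t has hst htb
    have l1 := hρl s u t has hsu hut htb
    have l2 := hρr s u t has hsu hut htb
    have xb := hx u t (has.trans hsu) hut htb
    have p1' : ‖z u - z s - z' s (x u - x s)‖ ≤ C' * ρ s t ^ 2 := p1.trans (by gcongr)
    have p2' : ‖z' u - z' s‖ ≤ C' * ρ s t := p2.trans (by gcongr)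
    have q1' : ‖z t - z u - z' u (x t - x u)‖ ≤ C * ρ s t ^ 2 := q1.trans (by gcongr)
    have q2' : ‖z' t - z' u‖ ≤ C * ρ s t := q2.trans (by gcongr)
    have w : ‖(z' u - z' s) (x t - x u)‖ ≤ C' * ρ s t ^ 2 :=
      calc _ ≤ ‖z' u - z' s‖ * ‖x t - x u‖ := ContinuousLinearMap.le_opNorm _ _
        _ ≤ (C' * ρ s t) * ρ s t := by gcongr; exact xb.trans l2
        _ = _ := by ring
    constructor
    · have e : z t - z s - z' s (x t - x s) = (z u - z s - z' s (x u - x s)) +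
          (z t - z u - z' u (x t - x u)) + (z' u - z' s) (x t - x u) := by
        simp only [map_sub, sub_apply]; abel
      rw [e]
      calc _ ≤ _ := norm_add₃_le
        _ ≤ _ := add_le_add (add_le_add p1' q1') w
        _ = _ := by ring
    · have e : z' t - z' s = (z' u - z' s) + (z' t - z' u) := by abel
      rw [e]
      calc _ ≤ _ := norm_add_le _ _
        _ ≤ _ := add_le_add p2' q2'
        _ ≤ _ := by nlinarith [mul_nonneg hC' r]

/-- **Euclidean equivalence of the flat controlled-rough-path definition and the gauge
definition** (Theorem 2.47 of Driver–Semko). -/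
theorem flatCRP_iff_gaugeCRP
    {T p : ℝ} (hT : 0 < T) (hp1 : 1 ≤ p) (hp3 : p < 3) {k : ℕ} (hk : 1 ≤ k)
    {ω : ℝ → ℝ → ℝ} (hω : IsControl T ω)
    {x : ℝ → Euc k} {XX : ℝ → ℝ → EuclideanSpace ℝ (Fin k × Fin k)}
    (hX : IsRoughPath T p ω x XX) (hgeo : IsWeakGeometric T x XX)
    {d : ℕ} {D : Set (Euc d × Euc d)}
    {ψ : Euc d × Euc d → Euc d} {U : Euc d × Euc d → Euc d →L[ℝ] Euc d}
    (hG : IsLocalGauge D ψ U)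
    {a b : ℝ} (ha : 0 ≤ a) (hab : a ≤ b) (hbT : b ≤ T)
    {z : ℝ → Euc d} {z' : ℝ → Euc k →L[ℝ] Euc d}
    (hz : ContinuousOn z (Set.Icc a b)) (hz' : ContinuousOn z' (Set.Icc a b))
    {W₀ : Set (Euc d)} (hW₀open : IsOpen W₀) (hW₀conv : Convex ℝ W₀)
    (hzW : ∀ s ∈ Set.Icc a b, z s ∈ W₀) (hWD : W₀ ×ˢ W₀ ⊆ D) :
    (∃ C : ℝ, ∀ ⦃s t : ℝ⦄, a ≤ s → s ≤ t → t ≤ b →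
        ‖z t - z s - z' s (x t - x s)‖ ≤ C * ω s t ^ (2 / p) ∧
        ‖z' t - z' s‖ ≤ C * ω s t ^ (1 / p)) ↔
    (∃ C : ℝ, ∀ ⦃s t : ℝ⦄, a ≤ s → s ≤ t → t ≤ b →
        ‖ψ (z s, z t) - z' s (x t - x s)‖ ≤ C * ω s t ^ (2 / p) ∧
        ‖(U (z s, z t)).comp (z' t) - z' s‖ ≤ C * ω s t ^ (1 / p)) := by
  have hp0 : 0 < p := by linarith
  obtain ⟨K, hKcpt, hKc, hKW, hzK⟩ : ∃ K : Set (Euc d), IsCompact K ∧ Convex ℝ K ∧ K ⊆ W₀ ∧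
      ∀ s ∈ Set.Icc a b, z s ∈ K := by
    have hS : IsCompact (z '' Set.Icc a b) := isCompact_Icc.image_of_continuousOn hz
    obtain ⟨F, hFf, hF2, hF1⟩ : ∃ F : Set (Euc d), F.Finite ∧ F ⊆ W₀ ∧
        z '' Set.Icc a b ⊆ convexHull ℝ F := by
      refine hS.induction_on (p := fun S => ∃ F : Set (Euc d), F.Finite ∧ F ⊆ W₀ ∧
        S ⊆ convexHull ℝ F) ⟨∅, Set.finite_empty, by simp, by simp⟩ ?_ ?_ ?_
      · rintro S S' hSS ⟨F, h1, h2, h3⟩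
        exact ⟨F, h1, h2, hSS.trans h3⟩
      · rintro S S' ⟨F, h1, h2, h3⟩ ⟨F', h1', h2', h3'⟩
        exact ⟨F ∪ F', h1.union h1', Set.union_subset h2 h2', Set.union_subset
          (h3.trans (convexHull_mono Set.subset_union_left))
          (h3'.trans (convexHull_mono Set.subset_union_right))⟩
      · rintro y ⟨s, hs, rfl⟩
        obtain ⟨F, hF1, hF2⟩ := (convex_singleton (𝕜 := ℝ)
          (z s)).exists_subset_interior_convexHull_finset_of_isCompact isCompact_singleton
          (t := W₀) (by rw [nhdsSet_singleton]; exact hW₀open.mem_nhds (hzW s hs))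
        exact ⟨convexHull ℝ (F : Set (Euc d)), mem_nhdsWithin_of_mem_nhds
          (mem_interior_iff_mem_nhds.1 (hF1 rfl)), F, F.finite_toSet,
          (subset_convexHull ℝ _).trans hF2, subset_rfl⟩
    exact ⟨convexHull ℝ F, hFf.isCompact_convexHull ℝ,
      convex_convexHull _ _, convexHull_min hF2 hW₀conv, fun s hs => hF1 ⟨s, hs, rfl⟩⟩
  obtain ⟨M, hM, hMg⟩ := aux_gauge hG hKcpt hKc ((Set.prod_mono hKW hKW).trans hWD)
  obtain ⟨B₀, hB₀⟩ := isCompact_Icc.exists_bound_of_continuousOn hz'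
  obtain ⟨B, hB, hBz⟩ : ∃ B : ℝ, 0 ≤ B ∧ ∀ s ∈ Set.Icc a b, ‖z' s‖ ≤ B :=
    ⟨max B₀ 0, le_max_right _ _, fun s hs => (hB₀ s hs).trans (le_max_left _ _)⟩
  set ρ : ℝ → ℝ → ℝ := fun s t => ω s t ^ (1 / p) with hρ
  have hω0 : ∀ s t, a ≤ s → s ≤ t → t ≤ b → 0 ≤ ω s t := fun s t h1 h2 h3 =>
    hω.nonneg (ha.trans h1) h2 (h3.trans hbT)
  have hρ0 : ∀ s t, a ≤ s → s ≤ t → t ≤ b → 0 ≤ ρ s t := fun s t h1 h2 h3 =>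
    Real.rpow_nonneg (hω0 s t h1 h2 h3) _
  have hρ2 : ∀ s t, a ≤ s → s ≤ t → t ≤ b → ω s t ^ (2 / p) = ρ s t ^ 2 := by
    intro s t h1 h2 h3
    rw [hρ]
    simp only
    rw [← Real.rpow_natCast, ← Real.rpow_mul (hω0 s t h1 h2 h3)]
    congr 1
    push_cast
    ring
  have hρl : ∀ s u t, a ≤ s → s ≤ u → u ≤ t → t ≤ b → ρ s u ≤ ρ s t := by
    intro s u t h1 h2 h3 h4
    refine Real.rpow_le_rpow (hω0 s u h1 h2 (h3.trans h4)) ?_ (by positivity)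
    linarith [hω.superadditive (ha.trans h1) h2 h3 (h4.trans hbT), hω0 u t (h1.trans h2) h3 h4]
  have hρr : ∀ s u t, a ≤ s → s ≤ u → u ≤ t → t ≤ b → ρ u t ≤ ρ s t := by
    intro s u t h1 h2 h3 h4
    refine Real.rpow_le_rpow (hω0 u t (h1.trans h2) h3 h4) ?_ (by positivity)
    linarith [hω.superadditive (ha.trans h1) h2 h3 (h4.trans hbT), hω0 s u h1 h2 (h3.trans h4)]
  set R := ρ a b with hR
  have hR0 : 0 ≤ R := hρ0 a b le_rfl hab le_rfl
  have hρR : ∀ s t, a ≤ s → s ≤ t → t ≤ b → ρ s t ≤ R := fun s t h1 h2 h3 =>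
    (hρl s t b h1 h2 h3 le_rfl).trans (hρr a s b le_rfl h1 (h2.trans h3) le_rfl)
  have hxρ : ∀ s t, a ≤ s → s ≤ t → t ≤ b → ‖x t - x s‖ ≤ ρ s t := fun s t h1 h2 h3 =>
    hX.bound_x (ha.trans h1) h2 (h3.trans hbT)
  have hzx : ∀ s t, a ≤ s → s ≤ t → t ≤ b → ‖z' s (x t - x s)‖ ≤ B * ρ s t := by
    intro s t h1 h2 h3
    calc _ ≤ ‖z' s‖ * ‖x t - x s‖ := ContinuousLinearMap.le_opNorm _ _
      _ ≤ _ := mul_le_mul (hBz s ⟨h1, h2.trans h3⟩) (hxρ s t h1 h2 h3) (norm_nonneg _) hB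
  -- a bound for a vector close to `z' s x`
  have hclose : ∀ C : ℝ, 0 ≤ C → ∀ s t, a ≤ s → s ≤ t → t ≤ b → ∀ v : Euc d,
      ‖v - z' s (x t - x s)‖ ≤ C * ρ s t ^ 2 → ‖v‖ ≤ (C * R + B) * ρ s t := by
    intro C hC s t h1 h2 h3 v hv
    have e : v = (v - z' s (x t - x s)) + z' s (x t - x s) := by abel
    have r0 := hρ0 s t h1 h2 h3
    have rR := hρR s t h1 h2 h3
    calc ‖v‖ = ‖(v - z' s (x t - x s)) + z' s (x t - x s)‖ := by rw [← e]
      _ ≤ _ := norm_add_le _ _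
      _ ≤ C * ρ s t ^ 2 + B * ρ s t := add_le_add hv (hzx s t h1 h2 h3)
      _ = (C * ρ s t + B) * ρ s t := by ring
      _ ≤ _ := by gcongr
  -- increments of size `L ρ` make the two notions agree
  have hdiff : ∀ L : ℝ, 0 ≤ L → ∀ s t, a ≤ s → s ≤ t → t ≤ b → ‖z t - z s‖ ≤ L * ρ s t →
      ‖ψ (z s, z t) - (z t - z s)‖ ≤ M * L ^ 2 * ρ s t ^ 2 ∧
      ‖(U (z s, z t)).comp (z' t) - z' t‖ ≤ M * L * B * ρ s t := by
    intro L hL s t h1 h2 h3 hl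
    obtain ⟨g1, g2⟩ := hMg (z s) (hzK s ⟨h1, h2.trans h3⟩) (z t) (hzK t ⟨h1.trans h2, h3⟩)
    have r0 := hρ0 s t h1 h2 h3
    constructor
    · calc _ ≤ _ := g1
        _ ≤ M * (L * ρ s t) ^ 2 := by gcongr
        _ = _ := by ring
    · have e : (U (z s, z t)).comp (z' t) - z' t =
          (U (z s, z t) - ContinuousLinearMap.id ℝ (Euc d)).comp (z' t) := by
        rw [ContinuousLinearMap.sub_comp, ContinuousLinearMap.id_comp]
      rw [e]
      calc _ ≤ ‖U (z s, z t) - ContinuousLinearMap.id ℝ (Euc d)‖ * ‖z' t‖ :=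
            ContinuousLinearMap.opNorm_comp_le _ _
        _ ≤ (M * (L * ρ s t)) * B :=
            mul_le_mul (g2.trans (by gcongr)) (hBz t ⟨h1.trans h2, h3⟩) (norm_nonneg _)
              (by positivity)
        _ = _ := by ring
  constructor
  · rintro ⟨C₀, hC₀⟩
    obtain ⟨C, hC, hCb⟩ : ∃ C : ℝ, 0 ≤ C ∧ ∀ s t, a ≤ s → s ≤ t → t ≤ b →
        ‖z t - z s - z' s (x t - x s)‖ ≤ C * ρ s t ^ 2 ∧ ‖z' t - z' s‖ ≤ C * ρ s t := by
      refine ⟨max C₀ 0, le_max_right _ _, fun s t h1 h2 h3 => ?_⟩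
      obtain ⟨c1, c2⟩ := hC₀ h1 h2 h3
      rw [hρ2 s t h1 h2 h3] at c1
      exact ⟨c1.trans (mul_le_mul_of_nonneg_right (le_max_left _ _) (sq_nonneg _)),
        c2.trans (mul_le_mul_of_nonneg_right (le_max_left _ _) (hρ0 s t h1 h2 h3))⟩
    set L := C * R + B with hL
    have hL0 : 0 ≤ L := by positivity
    refine ⟨M * L ^ 2 + M * L * B + C, fun s t h1 h2 h3 => ?_⟩
    obtain ⟨c1, c2⟩ := hCb s t h1 h2 h3
    obtain ⟨d1, d2⟩ := hdiff L hL0 s t h1 h2 h3 (hclose C hC s t h1 h2 h3 _ c1)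
    have r0 := hρ0 s t h1 h2 h3
    rw [hρ2 s t h1 h2 h3]
    constructor
    · have e : ψ (z s, z t) - z' s (x t - x s) = (ψ (z s, z t) - (z t - z s)) +
          (z t - z s - z' s (x t - x s)) := by abel
      rw [e]
      refine (norm_add_le _ _).trans ((add_le_add d1 c1).trans ?_)
      have : 0 ≤ M * L * B * ρ s t ^ 2 := by positivity
      linarith
    · have e : (U (z s, z t)).comp (z' t) - z' s = ((U (z s, z t)).comp (z' t) - z' t) +
          (z' t - z' s) := by abel
      rw [e]
      refine (norm_add_le _ _).trans ((add_le_add d2 c2).trans ?_)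
      have : 0 ≤ M * L ^ 2 * ρ s t := by positivity
      change _ ≤ _ * ρ s t
      linarith
  · rintro ⟨C₀, hC₀⟩
    obtain ⟨C, hC, hCb⟩ : ∃ C : ℝ, 0 ≤ C ∧ ∀ s t, a ≤ s → s ≤ t → t ≤ b →
        ‖ψ (z s, z t) - z' s (x t - x s)‖ ≤ C * ρ s t ^ 2 ∧
        ‖(U (z s, z t)).comp (z' t) - z' s‖ ≤ C * ρ s t := by
      refine ⟨max C₀ 0, le_max_right _ _, fun s t h1 h2 h3 => ?_⟩
      obtain ⟨c1, c2⟩ := hC₀ h1 h2 h3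
      rw [hρ2 s t h1 h2 h3] at c1
      exact ⟨c1.trans (mul_le_mul_of_nonneg_right (le_max_left _ _) (sq_nonneg _)),
        c2.trans (mul_le_mul_of_nonneg_right (le_max_left _ _) (hρ0 s t h1 h2 h3))⟩
    have huc := isCompact_Icc.uniformContinuousOn_of_continuous hz
    obtain ⟨δ₀, hδ₀, hδ⟩ := Metric.uniformContinuousOn_iff.1 huc (1 / (2 * M + 1)) (by positivity)
    set L := 2 * (C * R + B) with hL
    have hL0 : 0 ≤ L := by positivity
    have hloc : ∀ s t, a ≤ s → s ≤ t → t ≤ b → t - s ≤ δ₀ / 2 →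
        ‖z t - z s - z' s (x t - x s)‖ ≤ (M * L ^ 2 + M * L * B + C) * ρ s t ^ 2 ∧
        ‖z' t - z' s‖ ≤ (M * L ^ 2 + M * L * B + C) * ρ s t := by
      intro s t h1 h2 h3 hd
      have hs : s ∈ Set.Icc a b := ⟨h1, h2.trans h3⟩
      have ht : t ∈ Set.Icc a b := ⟨h1.trans h2, h3⟩
      have hsm : ‖z t - z s‖ < 1 / (2 * M + 1) := by
        rw [← dist_eq_norm]
        refine hδ t ht s hs ?_
        rw [Real.dist_eq, abs_of_nonneg (by linarith)]
        linarith
      obtain ⟨c1, c2⟩ := hCb s t h1 h2 h3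
      have r0 := hρ0 s t h1 h2 h3
      have hψb := hclose C hC s t h1 h2 h3 _ c1
      have g1 := (hMg (z s) (hzK s hs) (z t) (hzK t ht)).1
      have hMs : M * ‖z t - z s‖ ≤ 1 / 2 := by
        have : M * ‖z t - z s‖ ≤ M * (1 / (2 * M + 1)) := by gcongr
        refine this.trans ?_
        rw [mul_one_div, div_le_div_iff₀ (by positivity) (by norm_num)]
        linarith
      have htri : ‖z t - z s‖ ≤ ‖ψ (z s, z t)‖ + ‖ψ (z s, z t) - (z t - z s)‖ := by
        have e : z t - z s = ψ (z s, z t) - (ψ (z s, z t) - (z t - z s)) := by abel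
        calc ‖z t - z s‖ = ‖ψ (z s, z t) - (ψ (z s, z t) - (z t - z s))‖ := by rw [← e]
          _ ≤ _ := norm_sub_le _ _
      have hl : ‖z t - z s‖ ≤ L * ρ s t := by
        have : M * ‖z t - z s‖ ^ 2 ≤ 1 / 2 * ‖z t - z s‖ := by
          calc _ = (M * ‖z t - z s‖) * ‖z t - z s‖ := by ring
            _ ≤ _ := by gcongr
        rw [hL]
        linarith
      obtain ⟨d1, d2⟩ := hdiff L hL0 s t h1 h2 h3 hl
      constructor
      · have e : z t - z s - z' s (x t - x s) = (ψ (z s, z t) - z' s (x t - x s)) -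
            (ψ (z s, z t) - (z t - z s)) := by abel
        rw [e]
        refine (norm_sub_le _ _).trans ((add_le_add c1 d1).trans ?_)
        have : 0 ≤ M * L * B * ρ s t ^ 2 := by positivity
        linarith
      · have e : z' t - z' s = ((U (z s, z t)).comp (z' t) - z' s) -
            ((U (z s, z t)).comp (z' t) - z' t) := by abel
        rw [e]
        refine (norm_sub_le _ _).trans ((add_le_add c2 d2).trans ?_)
        have : 0 ≤ M * L ^ 2 * ρ s t := by positivity
        linarith
    obtain ⟨n, hn⟩ := exists_nat_ge ((b - a) / (δ₀ / 2))
    obtain ⟨C', hC', hfin⟩ := aux_patch (half_pos hδ₀) (by positivity) hρ0 hρl hρr hxρ hloc n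
    refine ⟨C', fun s t h1 h2 h3 => ?_⟩
    rw [hρ2 s t h1 h2 h3]
    refine hfin s t h1 h2 h3 ?_
    rw [div_le_iff₀ (by positivity)] at hn
    linarith
end
end

section
/- Patching lemma for estimates over an interlaced cover: Let ω be a control on [S,T] and {a_i, b_i}_{i=0}^{l} an interlaced cover of [S,T] with ω(a_{i+1}, b_i) > 0 for all 0 ≤ i < l. Let θ > 0 and let F : D → [0,∞) be a bounded function on some D ⊆ Δ_{[S,T]} := {(s,t) : S ≤ s ≤ t ≤ T}, such that for each 0 ≤ i ≤ l there exists C_i < ∞ with F(s,t) ≤ C_i ω(s,t)^θ for all (s,t) ∈ D with a_i ≤ s ≤ t ≤ b_i. Then there exists C̃ < ∞ such that F(s,t) ≤ C̃ ω(s,t)^θ for all (s,t) ∈ D. -/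
/-- `ω` is a control on the simplex `{(s,t) : S ≤ s ≤ t ≤ T}`. -/
structure IsControlOn (S T : ℝ) (ω : ℝ → ℝ → ℝ) : Prop where
  cont : ContinuousOn (fun q : ℝ × ℝ => ω q.1 q.2)
    {q : ℝ × ℝ | S ≤ q.1 ∧ q.1 ≤ q.2 ∧ q.2 ≤ T}
  nonneg : ∀ ⦃s t : ℝ⦄, S ≤ s → s ≤ t → t ≤ T → 0 ≤ ω s t
  zero : ∀ ⦃s : ℝ⦄, S ≤ s → s ≤ T → ω s s = 0
  superadditive : ∀ ⦃s t u : ℝ⦄, S ≤ s → s ≤ t → t ≤ u → u ≤ T → ω s t + ω t u ≤ ω s u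

/-- **Patching lemma for estimates over an interlaced cover.**
If a bounded nonnegative function `F` on `D ⊆ Δ_{[S,T]}` satisfies `F(s,t) ≤ Cᵢ ω(s,t)^θ` on
each interval `[aᵢ, bᵢ]` of an interlaced cover with `ω(a_{i+1}, bᵢ) > 0`, then a single
constant works on all of `D`. -/
theorem patching_over_interlaced_cover
    {S T : ℝ} (hST : S < T) {ω : ℝ → ℝ → ℝ} (hω : IsControlOn S T ω)
    {l : ℕ} {a b : ℕ → ℝ}
    (ha0 : a 0 = S) (hbl : b l = T)
    (hab : ∀ i ≤ l, a i < b i)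
    (hinter : ∀ i < l, a i < a (i + 1) ∧ a (i + 1) < b i ∧ b i < b (i + 1))
    (hωpos : ∀ i < l, 0 < ω (a (i + 1)) (b i))
    {θ : ℝ} (hθ : 0 < θ)
    {D : Set (ℝ × ℝ)} (hD : D ⊆ {q : ℝ × ℝ | S ≤ q.1 ∧ q.1 ≤ q.2 ∧ q.2 ≤ T})
    {F : ℝ × ℝ → ℝ} (hFnonneg : ∀ q ∈ D, 0 ≤ F q)
    (hFbdd : ∃ M : ℝ, ∀ q ∈ D, F q ≤ M)
    (hloc : ∀ i ≤ l, ∃ Ci : ℝ, ∀ q ∈ D, a i ≤ q.1 → q.2 ≤ b i → F q ≤ Ci * ω q.1 q.2 ^ θ) :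
    ∃ C : ℝ, ∀ q ∈ D, F q ≤ C * ω q.1 q.2 ^ θ := by
  obtain ⟨M, hM⟩ := hFbdd
  have key : ∀ k ≤ l, ∃ C : ℝ, ∀ q ∈ D, q.2 ≤ b k → F q ≤ C * ω q.1 q.2 ^ θ := by
    intro k
    induction k with
    | zero =>
      intro hk
      obtain ⟨C, hC⟩ := hloc 0 hk
      exact ⟨C, fun q hq h2 => hC q hq (ha0 ▸ (hD hq).1) h2⟩
    | succ k ih =>
      intro hk
      obtain ⟨C1, h1⟩ := ih (by omega)
      obtain ⟨C2, h2⟩ := hloc (k + 1) hk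
      have hw := hωpos k (by omega)
      obtain ⟨_, hi, _⟩ := hinter k (by omega)
      set w := ω (a (k + 1)) (b k) with hwdef
      have hwθ : 0 < w ^ θ := Real.rpow_pos_of_pos hw θ
      have hc : 0 ≤ |M| / w ^ θ := by positivity
      refine ⟨|C1| + |C2| + |M| / w ^ θ, fun q hq hqb => ?_⟩
      obtain ⟨hS, hle, hT⟩ := hD hq
      have hnn : 0 ≤ ω q.1 q.2 ^ θ := Real.rpow_nonneg (hω.nonneg hS hle hT) θ
      have a1 := abs_nonneg C1
      have a2 := abs_nonneg C2
      have l1 := le_abs_self C1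
      have l2 := le_abs_self C2
      by_cases c1 : q.2 ≤ b k
      · exact (h1 q hq c1).trans (mul_le_mul_of_nonneg_right (by linarith) hnn)
      by_cases c2 : a (k + 1) ≤ q.1
      · exact (h2 q hq c2 hqb).trans (mul_le_mul_of_nonneg_right (by linarith) hnn)
      push Not at c1 c2
      have e1 := hω.superadditive hS c2.le hi.le (c1.le.trans hT)
      have e2 := hω.superadditive hS (c2.le.trans hi.le) c1.le hT
      have n1 := hω.nonneg hS c2.le (hi.le.trans (c1.le.trans hT))
      have n2 := hω.nonneg (hS.trans (c2.le.trans hi.le)) c1.le hT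
      have hww : w ≤ ω q.1 q.2 := by linarith
      have hp : w ^ θ ≤ ω q.1 q.2 ^ θ := Real.rpow_le_rpow hw.le hww hθ.le
      calc F q ≤ |M| := (hM q hq).trans (le_abs_self M)
        _ = |M| / w ^ θ * w ^ θ := by field_simp
        _ ≤ |M| / w ^ θ * ω q.1 q.2 ^ θ := mul_le_mul_of_nonneg_left hp hc
        _ ≤ _ := mul_le_mul_of_nonneg_right (by linarith) hnn
  obtain ⟨C, hC⟩ := key l le_rfl
  exact ⟨C, fun q hq => hC q hq (hbl ▸ (hD hq).2.2)⟩
end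

section
/- Almost-additivity of logarithm increments of a controlled rough path (Euclidean version): Let X = (x, 𝕏) be a weak-geometric p-rough path with control ω on [0,T], let (z, z†) be an ℝ^d-valued rough path controlled by X on [0,T], let ψ be a local logarithm on ℝ^d with open domain D, and let W₀ ⊆ ℝ^d be an open convex set with z([0,T]) ⊆ W₀ and W₀ × W₀ ⊆ D. Then there exists C < ∞ such that for all 0 ≤ s ≤ t ≤ u ≤ T, |ψ(z_t, z_u) − D₂ψ(z_t, z_s)[ψ(z_s, z_u) − ψ(z_s, z_t)]| ≤ C ω(s,u)^{3/p}. -/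
noncomputable section

open scoped BigOperators

/-- `ψ` is a local logarithm on `ℝ^d` with open domain `D`. -/
structure IsLocalLog {d : ℕ} (D : Set (Euc d × Euc d)) (ψ : Euc d × Euc d → Euc d) : Prop where
  open_dom : IsOpen D
  smooth : ContDiffOn ℝ (⊤ : ℕ∞) ψ D
  diag_zero : ∀ x : Euc d, (x, x) ∈ D → ψ (x, x) = 0
  diag_deriv : ∀ x : Euc d, (x, x) ∈ D →
    fderiv ℝ (fun w => ψ (x, w)) x = ContinuousLinearMap.id ℝ (Euc d)

lemma lip_aux {E F : Type*} [NormedAddCommGroup E] [NormedSpace ℝ E]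
    [NormedAddCommGroup F] [NormedSpace ℝ F] {D K : Set E} (hD : IsOpen D) (hK : IsCompact K)
    (hc : Convex ℝ K) (hKD : K ⊆ D) {g : E → F} (hg : ContDiffOn ℝ (⊤ : ℕ∞) g D) :
    ∃ M : ℝ, 0 ≤ M ∧ ∀ p ∈ K, ∀ q ∈ K, ‖g p - g q‖ ≤ M * ‖p - q‖ := by
  have h1 : ContinuousOn (fderiv ℝ g) K :=
    (hg.continuousOn_fderiv_of_isOpen hD (by norm_num)).mono hKD
  obtain ⟨M, hM⟩ := hK.exists_bound_of_continuousOn h1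
  refine ⟨max M 0, le_max_right _ _, fun p hp q hq => ?_⟩
  refine hc.norm_image_sub_le_of_norm_fderiv_le (𝕜 := ℝ) (fun y hy => ?_)
    (fun y hy => (hM y hy).trans (le_max_left _ _)) hq hp
  exact (hg.differentiableOn (by norm_num)).differentiableAt (hD.mem_nhds (hKD hy))

/-- partial derivative in the second variable -/
def dd {d : ℕ} {F : Type*} [NormedAddCommGroup F] [NormedSpace ℝ F]
    (g : Euc d × Euc d → F) (q : Euc d × Euc d) : Euc d →L[ℝ] F :=
  (fderiv ℝ g q).comp (ContinuousLinearMap.inr ℝ (Euc d) (Euc d))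

lemma dd_smooth {d : ℕ} {F : Type*} [NormedAddCommGroup F] [NormedSpace ℝ F]
    {D : Set (Euc d × Euc d)} (hD : IsOpen D)
    {g : Euc d × Euc d → F} (hg : ContDiffOn ℝ (⊤ : ℕ∞) g D) :
    ContDiffOn ℝ (⊤ : ℕ∞) (dd g) D :=
  (hg.fderiv_of_isOpen hD (m := (⊤ : ℕ∞)) (by norm_cast)).clm_comp contDiffOn_const

lemma dd_has {d : ℕ} {F : Type*} [NormedAddCommGroup F] [NormedSpace ℝ F]
    {D : Set (Euc d × Euc d)} (hD : IsOpen D)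
    {g : Euc d × Euc d → F} (hg : ContDiffOn ℝ (⊤ : ℕ∞) g D) {x y : Euc d} (h : (x, y) ∈ D) :
    HasFDerivAt (fun w => g (x, w)) (dd g (x, y)) y := by
  have h1 : HasFDerivAt g (fderiv ℝ g (x, y)) (x, y) :=
    ((hg.differentiableOn (by norm_num)).differentiableAt (hD.mem_nhds h)).hasFDerivAt
  exact h1.comp y (hasFDerivAt_prodMk_right x y)

lemma core {d : ℕ} {D : Set (Euc d × Euc d)} {ψ : Euc d × Euc d → Euc d} (hψ : IsLocalLog D ψ)
    {K : Set (Euc d)} (hK : IsCompact K) (hc : Convex ℝ K) (hKD : K ×ˢ K ⊆ D) :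
    ∃ M : ℝ, 0 ≤ M ∧ ∀ a ∈ K, ∀ b ∈ K, ∀ c ∈ K,
      ‖ψ (b, c) - fderiv ℝ (fun w => ψ (b, w)) a (ψ (a, c) - ψ (a, b))‖
        ≤ M * ‖b - a‖ * (‖b - a‖ + ‖c - a‖) * ‖c - b‖ := by
  have hD := hψ.open_dom
  have s1 := dd_smooth hD hψ.smooth
  have s2 := dd_smooth hD s1
  have hKK := hK.prod hK
  have hcc := hc.prod hc
  obtain ⟨M1, hM1, l1⟩ := lip_aux hD hKK hcc hKD s1
  obtain ⟨M2, hM2, l2⟩ := lip_aux hD hKK hcc hKD s2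
  obtain ⟨B, hB⟩ := hKK.exists_bound_of_continuousOn (s2.continuousOn.mono hKD)
  set L := dd ψ with hL
  set A := dd L with hA
  have mem : ∀ {x y}, x ∈ K → y ∈ K → (x, y) ∈ D := fun hx hy => hKD ⟨hx, hy⟩
  have hone : ∀ x ∈ K, L (x, x) = ContinuousLinearMap.id ℝ (Euc d) := fun x hx => by
    rw [← hψ.diag_deriv x (mem hx hx)]
    exact (dd_has hD hψ.smooth (mem hx hx)).fderiv.symm
  refine ⟨M2 + M1 * |B|, by positivity, fun a ha b hb c hcK => ?_⟩
  have nrm : ∀ y : Euc d, ‖((b, y) : Euc d × Euc d) - (a, y)‖ = ‖b - a‖ := fun y => by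
    simp [Prod.norm_def]
  have e1 : ‖L (b, a) - ContinuousLinearMap.id ℝ (Euc d)‖ ≤ M1 * ‖b - a‖ := by
    have := l1 (b, a) ⟨hb, ha⟩ (a, a) ⟨ha, ha⟩
    rwa [nrm, hone a ha] at this
  -- second derivative bound
  have e2 : ∀ y ∈ K, ‖A (b, y) - ((ContinuousLinearMap.compL ℝ (Euc d) (Euc d) (Euc d)
      (L (b, a))).comp (A (a, y)))‖ ≤ (M2 + M1 * |B|) * ‖b - a‖ := by
    intro y hy
    have h1 := l2 (b, y) ⟨hb, hy⟩ (a, y) ⟨ha, hy⟩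
    rw [nrm] at h1
    have h2 : ‖(ContinuousLinearMap.compL ℝ (Euc d) (Euc d) (Euc d)
        (L (b, a) - ContinuousLinearMap.id ℝ (Euc d))).comp (A (a, y))‖
        ≤ (M1 * ‖b - a‖) * |B| := by
      refine (ContinuousLinearMap.opNorm_comp_le _ _).trans ?_
      refine mul_le_mul ?_ ((hB _ ⟨ha, hy⟩).trans (le_abs_self B)) (norm_nonneg _) (by positivity)
      refine le_trans ?_ e1
      refine ContinuousLinearMap.opNorm_le_bound _ (norm_nonneg _) fun v => ?_
      exact ContinuousLinearMap.opNorm_comp_le _ _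
    have h3 : A (b, y) - ((ContinuousLinearMap.compL ℝ (Euc d) (Euc d) (Euc d)
      (L (b, a))).comp (A (a, y))) = (A (b, y) - A (a, y)) -
        (ContinuousLinearMap.compL ℝ (Euc d) (Euc d) (Euc d)
        (L (b, a) - ContinuousLinearMap.id ℝ (Euc d))).comp (A (a, y)) := by
      ext v w
      simp
    rw [h3]
    refine (norm_sub_le _ _).trans ?_
    linarith
  -- first derivative bound
  have e3 : ∀ y ∈ K, ‖L (b, y) - (L (b, a)).comp (L (a, y))‖
      ≤ (M2 + M1 * |B|) * ‖b - a‖ * ‖y - a‖ := by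
    intro y hy
    have := hc.norm_image_sub_le_of_norm_hasFDerivWithin_le
      (f := fun y => L (b, y) - (L (b, a)).comp (L (a, y)))
      (f' := fun y => A (b, y) - ((ContinuousLinearMap.compL ℝ (Euc d) (Euc d) (Euc d)
      (L (b, a))).comp (A (a, y)))) (fun y hy => ?_) e2 ha hy
    · simpa [hone a ha] using this
    · exact ((dd_has hD s1 (mem hb hy)).sub
        (((ContinuousLinearMap.compL ℝ (Euc d) (Euc d) (Euc d) (L (b, a))).hasFDerivAt).comp y
          (dd_has hD s1 (mem ha hy)))).hasFDerivWithinAt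
  have hseg : segment ℝ b c ⊆ K := hc.segment_subset hb hcK
  have e4 := (convex_segment (𝕜 := ℝ) b c).norm_image_sub_le_of_norm_hasFDerivWithin_le
      (f := fun y => ψ (b, y) - L (b, a) (ψ (a, y)))
      (f' := fun y => L (b, y) - (L (b, a)).comp (L (a, y)))
      (C := (M2 + M1 * |B|) * ‖b - a‖ * (‖b - a‖ + ‖c - a‖))
      (fun y hy => ((dd_has hD hψ.smooth (mem hb (hseg hy))).sub
        ((L (b, a)).hasFDerivAt.comp y
          (dd_has hD hψ.smooth (mem ha (hseg hy))))).hasFDerivWithinAt)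
      (fun y hy => by
        refine (e3 y (hseg hy)).trans ?_
        refine mul_le_mul_of_nonneg_left ?_ (by positivity)
        have h5 : y ∈ Metric.closedBall a (‖b - a‖ + ‖c - a‖) := by
          refine (convex_closedBall a _).segment_subset ?_ ?_ hy
          · rw [mem_closedBall_iff_norm]; linarith [norm_nonneg (c - a)]
          · rw [mem_closedBall_iff_norm]; linarith [norm_nonneg (b - a)]
        rwa [mem_closedBall_iff_norm] at h5)
      (left_mem_segment ℝ b c) (right_mem_segment ℝ b c)
  rw [(dd_has hD hψ.smooth (mem hb ha)).fderiv]
  have e5 : ψ (b, c) - dd ψ (b, a) (ψ (a, c) - ψ (a, b)) =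
      (ψ (b, c) - L (b, a) (ψ (a, c))) - (ψ (b, b) - L (b, a) (ψ (a, b))) := by
    rw [hψ.diag_zero b (mem hb hb), map_sub]
    simp only [hL]
    abel
  rw [e5]
  exact e4

lemma poly_aux {d : ℕ} {S W : Set (Euc d)} (hS : IsCompact S) (hW : IsOpen W)
    (hc : Convex ℝ W) (hSW : S ⊆ W) :
    ∃ v : Set (Euc d), v.Finite ∧ S ⊆ convexHull ℝ v ∧ convexHull ℝ v ⊆ W := by
  have h : ∀ y : Euc d, ∃ F : Set (Euc d), F.Finite ∧
      (y ∈ S → convexHull ℝ F ∈ nhds y ∧ F ⊆ W) := by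
    intro y
    by_cases hy : y ∈ S
    · obtain ⟨b, hb1, hb2⟩ := exists_mem_interior_convexHull_affineBasis (hW.mem_nhds (hSW hy))
      exact ⟨Set.range b, Set.finite_range b, fun _ => ⟨mem_interior_iff_mem_nhds.1 hb1,
        (subset_convexHull ℝ _).trans hb2⟩⟩
    · exact ⟨∅, Set.finite_empty, fun h => absurd h hy⟩
  choose F hF1 hF2 using h
  obtain ⟨t, ht1, ht2⟩ := hS.elim_nhds_subcover (fun y => convexHull ℝ (F y))
    (fun y hy => (hF2 y hy).1)
  refine ⟨⋃ y ∈ t, F y, t.finite_toSet.biUnion fun y _ => hF1 y, ?_, ?_⟩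
  · refine ht2.trans (Set.iUnion₂_subset fun y hy => convexHull_mono ?_)
    exact Set.subset_biUnion_of_mem (u := F) (s := (t : Set (Euc d))) hy
  · exact convexHull_min (Set.iUnion₂_subset fun y hy => (hF2 y (ht1 y hy)).2) hc

/-- **Almost-additivity of logarithm increments of a controlled rough path**
(Euclidean version of Corollary 3.29 of Driver–Semko). -/
theorem log_increments_almost_additive
    {T p : ℝ} (hT : 0 < T) (hp1 : 1 ≤ p) (hp3 : p < 3) {k : ℕ} (hk : 1 ≤ k)
    {ω : ℝ → ℝ → ℝ} (hω : IsControl T ω)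
    {x : ℝ → Euc k} {XX : ℝ → ℝ → EuclideanSpace ℝ (Fin k × Fin k)}
    (hX : IsRoughPath T p ω x XX) (hgeo : IsWeakGeometric T x XX)
    {d : ℕ} {z : ℝ → Euc d} {z' : ℝ → Euc k →L[ℝ] Euc d}
    (hz : IsCRP p ω x 0 T z z')
    {D : Set (Euc d × Euc d)} {ψ : Euc d × Euc d → Euc d} (hψ : IsLocalLog D ψ)
    {W₀ : Set (Euc d)} (hW₀open : IsOpen W₀) (hW₀conv : Convex ℝ W₀)
    (hzW : ∀ s ∈ Set.Icc (0 : ℝ) T, z s ∈ W₀) (hWD : W₀ ×ˢ W₀ ⊆ D) :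
    ∃ C : ℝ, ∀ ⦃s t u : ℝ⦄, 0 ≤ s → s ≤ t → t ≤ u → u ≤ T →
      ‖ψ (z t, z u) -
          fderiv ℝ (fun w => ψ (z t, w)) (z s) (ψ (z s, z u) - ψ (z s, z t))‖
        ≤ C * ω s u ^ (3 / p) := by
  obtain ⟨cz, cz', C, hC⟩ := hz
  have hp0 : 0 < p := by linarith
  obtain ⟨v, hvf, hv1, hKW⟩ := poly_aux
    (isCompact_Icc.image_of_continuousOn cz) hW₀open hW₀conv (by
      rintro _ ⟨s, hs, rfl⟩; exact hzW s hs)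
  have hKc : IsCompact (convexHull ℝ v) := hvf.isCompact_convexHull ℝ
  obtain ⟨M, hM, hcore⟩ := core hψ hKc (convex_convexHull ℝ _)
    ((Set.prod_mono hKW hKW).trans hWD)
  have hmem : ∀ s, 0 ≤ s → s ≤ T → z s ∈ convexHull ℝ v := fun s h0 h1 =>
    hv1 ⟨s, ⟨h0, h1⟩, rfl⟩
  obtain ⟨B, hB⟩ := isCompact_Icc.exists_bound_of_continuousOn cz'
  set R := |B| + |C| * ω 0 T ^ (1 / p) with hR
  have h0T : 0 ≤ ω 0 T := hω.nonneg le_rfl hT.le le_rfl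
  have hR0 : 0 ≤ R := by positivity
  have mono : ∀ ⦃s' s t t' : ℝ⦄, 0 ≤ s' → s' ≤ s → s ≤ t → t ≤ t' → t' ≤ T →
      ω s t ≤ ω s' t' := by
    intro s' s t t' h0 h1 h2 h3 h4
    have a1 := hω.superadditive h0 h1 (h2.trans h3) h4
    have a2 := hω.superadditive (h0.trans h1) h2 h3 h4
    have a3 := hω.nonneg h0 h1 (by linarith)
    have a4 := hω.nonneg (by linarith : 0 ≤ t) h3 h4
    linarith
  have inc : ∀ ⦃s t : ℝ⦄, 0 ≤ s → s ≤ t → t ≤ T → ‖z t - z s‖ ≤ R * ω s t ^ (1 / p) := by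
    intro s t h0 h1 h2
    have hn := hω.nonneg h0 h1 h2
    have b1 := (hC h0 h1 h2).1
    have b2 : ‖z' s (x t - x s)‖ ≤ |B| * ω s t ^ (1 / p) :=
      ((z' s).le_opNorm _).trans (mul_le_mul ((hB s ⟨h0, h1.trans h2⟩).trans (le_abs_self B))
        (hX.bound_x h0 h1 h2) (norm_nonneg _) (abs_nonneg _))
    have b3 : ω s t ^ (2 / p) ≤ ω 0 T ^ (1 / p) * ω s t ^ (1 / p) := by
      have : (2 : ℝ) / p = 1 / p + 1 / p := by ring
      rw [this, Real.rpow_add_of_nonneg hn (by positivity) (by positivity)]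
      exact mul_le_mul_of_nonneg_right
        (Real.rpow_le_rpow hn (mono le_rfl h0 h1 h2 le_rfl) (by positivity)) (by positivity)
    have b4 : C * ω s t ^ (2 / p) ≤ |C| * (ω 0 T ^ (1 / p) * ω s t ^ (1 / p)) :=
      mul_le_mul (le_abs_self C) b3 (by positivity) (abs_nonneg _)
    have b5 : z t - z s = (z t - z s - z' s (x t - x s)) + z' s (x t - x s) := by abel
    rw [b5]
    refine (norm_add_le _ _).trans ?_
    rw [hR]
    linarith
  refine ⟨M * R * (R + R) * R, fun s t u h0 h1 h2 h3 => ?_⟩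
  have hn := hω.nonneg h0 (h1.trans h2) h3
  set q := ω s u ^ (1 / p) with hq
  have hq0 : 0 ≤ q := by positivity
  have g : ∀ ⦃a b : ℝ⦄, s ≤ a → a ≤ b → b ≤ u → ‖z b - z a‖ ≤ R * q := by
    intro a b ha hab hb
    refine (inc (h0.trans ha) hab (hb.trans h3)).trans (mul_le_mul_of_nonneg_left ?_ hR0)
    exact Real.rpow_le_rpow (hω.nonneg (h0.trans ha) hab (hb.trans h3))
      (mono h0 ha hab hb h3) (by positivity)
  have hq3 : ω s u ^ (3 / p) = q * q * q := by
    have : (3 : ℝ) / p = 1 / p + 1 / p + 1 / p := by ring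
    rw [this, Real.rpow_add_of_nonneg hn (by positivity) (by positivity),
      Real.rpow_add_of_nonneg hn (by positivity) (by positivity)]
  have g1 := g le_rfl h1 h2
  have g2 := g le_rfl (h1.trans h2) le_rfl
  have g3 := g h1 h2 le_rfl
  refine (hcore (z s) (hmem s h0 (by linarith)) (z t) (hmem t (by linarith) (by linarith))
    (z u) (hmem u (by linarith) h3)).trans ?_
  calc _ ≤ M * (R * q) * (R * q + R * q) * (R * q) := by gcongr
    _ = _ := by rw [hq3]; ring
end
end

section
/- Comparison of two logarithms on ℝ^d: Let ψ and ψ̃ be local logarithms on ℝ^d with a common open domain D. For x with (x,x) ∈ D set S_x := D₂²ψ(x,x) − D₂²ψ̃(x,x), the difference of second derivatives in the second variable on the diagonal. Then each S_x is a symmetric bilinear map ℝ^d × ℝ^d → ℝ^d, and for every x₀ ∈ ℝ^d with (x₀,x₀) ∈ D there exist r > 0 and C < ∞ such that for all x, y ∈ B_r(x₀), |ψ(x,y) − ψ̃(x,y) − (1/2) S_x(ψ(x,y), ψ(x,y))| ≤ C |y − x|³. -/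
noncomputable section

open scoped BigOperators

/-- Second derivative of `ψ` in the second variable, as a continuous bilinear map. -/
def D2sq {d : ℕ} (ψ : Euc d × Euc d → Euc d) (x y : Euc d) :
    Euc d →L[ℝ] Euc d →L[ℝ] Euc d :=
  fderiv ℝ (fun w => fderiv ℝ (fun w' => ψ (x, w')) w) y

theorem aux_mvt {E F : Type*} [NormedAddCommGroup E] [NormedSpace ℝ E]
    [NormedAddCommGroup F] [NormedSpace ℝ F] {x₀ x y : E} {r K : ℝ} (n : ℕ) (hK : 0 ≤ K)
    {f : E → F} {f' : E → E →L[ℝ] F}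
    (hf : ∀ w ∈ Metric.ball x₀ r, HasFDerivAt f (f' w) w)
    (hb : ∀ w ∈ Metric.ball x₀ r, ‖f' w‖ ≤ K * ‖w - x‖ ^ n)
    (hx : x ∈ Metric.ball x₀ r) (hy : y ∈ Metric.ball x₀ r) (h0 : f x = 0) :
    ‖f y‖ ≤ K * ‖y - x‖ ^ (n + 1) := by
  have hconv : Convex ℝ (Metric.ball x₀ r ∩ Metric.closedBall x ‖y - x‖) :=
    (convex_ball _ _).inter (convex_closedBall _ _)
  have := hconv.norm_image_sub_le_of_norm_hasFDerivWithin_le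
    (f := f) (f' := f') (C := K * ‖y - x‖ ^ n) (x := x) (y := y)
    (fun w hw => (hf w hw.1).hasFDerivWithinAt)
    (fun w hw => (hb w hw.1).trans (by
      have h2 : ‖w - x‖ ≤ ‖y - x‖ := by simpa [dist_eq_norm] using hw.2
      gcongr))
    ⟨hx, by simp⟩ ⟨hy, by simp [dist_eq_norm]⟩
  rw [h0, sub_zero] at this
  calc _ ≤ _ := this
    _ = _ := by ring

theorem aux_slice {E F : Type*} [NormedAddCommGroup E] [NormedSpace ℝ E]
    [NormedAddCommGroup F] [NormedSpace ℝ F] {φ : E × E → F} {x w : E}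
    (h : DifferentiableAt ℝ φ (x, w)) :
    HasFDerivAt (fun w' => φ (x, w'))
      ((fderiv ℝ φ (x, w)).comp (ContinuousLinearMap.inr ℝ E E)) w :=
  h.hasFDerivAt.comp w (hasFDerivAt_prodMk_right x w)

theorem aux_contDiff {E F : Type*} [NormedAddCommGroup E] [NormedSpace ℝ E]
    [NormedAddCommGroup F] [NormedSpace ℝ F] {φ : E × E → F} {D : Set (E × E)}
    (hD : IsOpen D) (h : ContDiffOn ℝ (⊤ : ℕ∞) φ D) :
    ContDiffOn ℝ (⊤ : ℕ∞)
      (fun p => (fderiv ℝ φ p).comp (ContinuousLinearMap.inr ℝ E E)) D :=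
  (h.fderiv_of_isOpen hD (m := ((⊤ : ℕ∞) : WithTop ℕ∞)) (by simp)).clm_comp contDiffOn_const

theorem aux_symm {d : ℕ} {D : Set (Euc d × Euc d)} {φ : Euc d × Euc d → Euc d}
    (hD : IsOpen D) (h : ContDiffOn ℝ (⊤ : ℕ∞) φ D) (x : Euc d) (hx : (x, x) ∈ D)
    (v w : Euc d) : D2sq φ x x v w = D2sq φ x x w v := by
  have h1 : ContDiffAt ℝ (⊤ : ℕ∞) φ (x, x) := h.contDiffAt (hD.mem_nhds hx)
  have h2 : ContDiffAt ℝ (⊤ : ℕ∞) (fun w' => φ (x, w')) x :=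
    h1.comp x (contDiffAt_const.prodMk contDiffAt_id)
  have h3 : IsSymmSndFDerivAt ℝ (fun w' => φ (x, w')) x :=
    h2.isSymmSndFDerivAt (by
      rw [minSmoothness_of_isRCLikeNormedField]
      exact WithTop.coe_le_coe.2 (le_top : (2 : ℕ∞) ≤ ⊤))
  exact h3 v w

theorem aux_taylor {d : ℕ} {D : Set (Euc d × Euc d)} {φ : Euc d × Euc d → Euc d}
    (hD : IsOpen D) (h : ContDiffOn ℝ (⊤ : ℕ∞) φ D) (x₀ : Euc d) (hx₀ : (x₀, x₀) ∈ D) :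
    ∃ r K : ℝ, 0 < r ∧ 0 ≤ K ∧ ∀ x ∈ Metric.ball x₀ r, ∀ y ∈ Metric.ball x₀ r,
      (x, x) ∈ D ∧ ‖D2sq φ x x‖ ≤ K ∧
      ‖φ (x, y) - φ (x, x) - fderiv ℝ (fun w => φ (x, w)) x (y - x)
        - (1 / 2 : ℝ) • D2sq φ x x (y - x) (y - x)‖ ≤ K * ‖y - x‖ ^ 3 := by
  set G := fun p => (fderiv ℝ φ p).comp (ContinuousLinearMap.inr ℝ (Euc d) (Euc d)) with hG
  have hGs : ContDiffOn ℝ (⊤ : ℕ∞) G D := aux_contDiff hD h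
  set H := fun p => (fderiv ℝ G p).comp (ContinuousLinearMap.inr ℝ (Euc d) (Euc d)) with hH
  have hHs : ContDiffOn ℝ (⊤ : ℕ∞) H D := aux_contDiff hD hGs
  have e1 : ∀ x w, (x, w) ∈ D → HasFDerivAt (fun w' => φ (x, w')) (G (x, w)) w := by
    intro x w hw
    exact aux_slice ((h.contDiffAt (hD.mem_nhds hw)).differentiableAt (by simp))
  have e2 : ∀ x w, (x, w) ∈ D → HasFDerivAt (fun w' => G (x, w')) (H (x, w)) w := by
    intro x w hw
    exact aux_slice ((hGs.contDiffAt (hD.mem_nhds hw)).differentiableAt (by simp))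
  have e3 : ∀ x w, (x, w) ∈ D → D2sq φ x w = H (x, w) := by
    intro x w hw
    have : (fun w => fderiv ℝ (fun w' => φ (x, w')) w) =ᶠ[nhds w] fun w' => G (x, w') := by
      have hc : ContinuousAt (fun w' : Euc d => (x, w')) w := by fun_prop
      filter_upwards [hc (hD.mem_nhds hw)] with w' hw'
      exact (e1 x w' hw').fderiv
    rw [D2sq, this.fderiv_eq]
    exact (e2 x w hw).fderiv
  obtain ⟨L, t, ht, hL⟩ := ((hHs.contDiffAt (hD.mem_nhds hx₀)).of_le
    (by exact_mod_cast le_top : (1 : WithTop ℕ∞) ≤ _)).exists_lipschitzOnWith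
  obtain ⟨r, hr, hball⟩ := Metric.mem_nhds_iff.1 (Filter.inter_mem ht (hD.mem_nhds hx₀))
  have hm : ∀ x ∈ Metric.ball x₀ r, ∀ y ∈ Metric.ball x₀ r, (x, y) ∈ t ∩ D := by
    intro x hx y hy
    apply hball
    rw [← ball_prod_same]
    exact ⟨hx, hy⟩
  have hx₀r : x₀ ∈ Metric.ball x₀ r := Metric.mem_ball_self hr
  refine ⟨r, L + (‖H (x₀, x₀)‖ + L * r), hr, by positivity, ?_⟩
  intro x hx y hy
  have hxx := (hm x hx x hx).2
  have hKL : (L : ℝ) ≤ L + (‖H (x₀, x₀)‖ + L * r) := by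
    have : (0 : ℝ) ≤ ‖H (x₀, x₀)‖ + L * r := by positivity
    linarith
  refine ⟨hxx, ?_, ?_⟩
  · rw [e3 x x hxx]
    have h1 := hL.dist_le_mul _ (hm x hx x hx).1 _ (hm x₀ hx₀r x₀ hx₀r).1
    have h2 : dist (x, x) (x₀, x₀) ≤ r := by
      rw [Prod.dist_eq]; simpa using (Metric.mem_ball.1 hx).le
    rw [dist_eq_norm] at h1
    have h3 := norm_le_norm_add_norm_sub' (H (x, x)) (H (x₀, x₀))
    have h4 : (L : ℝ) * dist (x, x) (x₀, x₀) ≤ L * r := by gcongr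
    have h5 : (0 : ℝ) ≤ L := L.2
    linarith
  · have hsym := aux_symm hD h x hxx
    rw [(e1 x x hxx).fderiv]
    rw [e3 x x hxx] at hsym ⊢
    refine le_trans ?_ (mul_le_mul_of_nonneg_right hKL (by positivity))
    have hGb : ∀ w ∈ Metric.ball x₀ r,
        ‖G (x, w) - G (x, x) - H (x, x) (w - x)‖ ≤ L * ‖w - x‖ ^ 2 := by
      intro w hw
      refine aux_mvt (x₀ := x₀) (r := r) (x := x) (y := w) 1 L.2
        (f := fun w => G (x, w) - G (x, x) - H (x, x) (w - x))
        (f' := fun w => H (x, w) - H (x, x)) ?_ ?_ hx hw (by simp)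
      · intro w hw
        have := ((e2 x w (hm x hx w hw).2).sub_const (G (x, x))).sub
          ((H (x, x)).hasFDerivAt.comp w ((hasFDerivAt_id w).sub_const x))
        exact this.congr_fderiv (by ext1 v; simp)
      · intro w hw
        have h1 := hL.dist_le_mul _ (hm x hx w hw).1 _ (hm x hx x hx).1
        rw [dist_eq_norm, Prod.dist_eq] at h1
        simpa [dist_eq_norm] using h1
    refine aux_mvt (x₀ := x₀) (r := r) (x := x) (y := y) 2 L.2
      (f := fun w => φ (x, w) - φ (x, x) - G (x, x) (w - x)
        - (1 / 2 : ℝ) • H (x, x) (w - x) (w - x))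
      (f' := fun w => G (x, w) - G (x, x) - H (x, x) (w - x)) ?_ hGb hx hy (by simp)
    intro w hw
    have hs : HasFDerivAt (fun w : Euc d => w - x) (ContinuousLinearMap.id ℝ (Euc d)) w :=
      (hasFDerivAt_id w).sub_const x
    have hA := (H (x, x)).hasFDerivAt.comp w hs
    have hB := (hA.clm_apply hs).const_smul (1 / 2 : ℝ)
    have := (((e1 x w (hm x hx w hw).2).sub_const (φ (x, x))).sub
          ((G (x, x)).hasFDerivAt.comp w hs)).sub hB
    refine this.congr_fderiv ?_
    ext1 v
    have := hsym v (w - x)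
    simp only [_root_.sub_apply, _root_.smul_apply,
      _root_.add_apply, ContinuousLinearMap.comp_apply,
      ContinuousLinearMap.flip_apply, ContinuousLinearMap.id_apply, Function.comp]
    rw [this]
    module

/-- **Comparison of two logarithms on `ℝ^d`** (Proposition 3.17 of Driver–Semko).
`S_x := D₂²ψ(x,x) − D₂²ψ̃(x,x)` is symmetric, and
`ψ(x,y) − ψ̃(x,y) = (1/2) S_x(ψ(x,y), ψ(x,y)) + O(|y − x|³)` locally. -/
theorem log_comparison
    {d : ℕ} {D : Set (Euc d × Euc d)} {ψ ψt : Euc d × Euc d → Euc d}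
    (hψ : IsLocalLog D ψ) (hψt : IsLocalLog D ψt) :
    (∀ x : Euc d, (x, x) ∈ D → ∀ v w : Euc d,
      (D2sq ψ x x - D2sq ψt x x) v w = (D2sq ψ x x - D2sq ψt x x) w v) ∧
    ∀ x₀ : Euc d, (x₀, x₀) ∈ D →
      ∃ r C : ℝ, 0 < r ∧ ∀ x ∈ Metric.ball x₀ r, ∀ y ∈ Metric.ball x₀ r,
        ‖ψ (x, y) - ψt (x, y)
            - (1 / 2 : ℝ) • (D2sq ψ x x - D2sq ψt x x) (ψ (x, y)) (ψ (x, y))‖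
          ≤ C * ‖y - x‖ ^ 3 := by
  refine ⟨?_, ?_⟩
  · intro x hx v w
    simp only [_root_.sub_apply]
    rw [aux_symm hψ.open_dom hψ.smooth x hx v w, aux_symm hψt.open_dom hψt.smooth x hx v w]
  intro x₀ hx₀
  obtain ⟨r₁, K, hr₁, hK, H₁⟩ := aux_taylor hψ.open_dom hψ.smooth x₀ hx₀
  obtain ⟨r₂, M, hr₂, hM, H₂⟩ := aux_taylor hψt.open_dom hψt.smooth x₀ hx₀
  refine ⟨min 1 (min r₁ r₂), K + M + (1 / 2) * ((K + M) * (3 * K) * (2 + 6 * K)),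
    by positivity, ?_⟩
  intro x hx y hy
  have hsub : ∀ z ∈ Metric.ball x₀ (min 1 (min r₁ r₂)),
      dist z x₀ < 1 ∧ z ∈ Metric.ball x₀ r₁ ∧ z ∈ Metric.ball x₀ r₂ := by
    intro z hz
    simpa [Metric.mem_ball] using hz
  obtain ⟨hx1, hx2, hx3⟩ := hsub x hx
  obtain ⟨hy1, hy2, hy3⟩ := hsub y hy
  obtain ⟨hxx, hS, hT⟩ := H₁ x hx2 y hy2
  obtain ⟨-, hS', hT'⟩ := H₂ x hx3 y hy3
  rw [hψ.diag_deriv x hxx, hψ.diag_zero x hxx] at hT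
  rw [hψt.diag_deriv x hxx, hψt.diag_zero x hxx] at hT'
  have hh : ‖y - x‖ ≤ 2 := by
    rw [← dist_eq_norm]
    have := dist_triangle_right y x x₀
    linarith
  simp only [sub_zero, ContinuousLinearMap.id_apply] at hT hT'
  set A := D2sq ψ x x
  set B := D2sq ψt x x
  set p := ψ (x, y)
  set q := ψt (x, y)
  set k := y - x
  have hn : 0 ≤ ‖k‖ := norm_nonneg k
  have hAB : ‖A - B‖ ≤ K + M := by
    have h0 := norm_sub_le A B
    exact h0.trans (add_le_add hS hS')
  have hAk : ‖A k k‖ ≤ K * ‖k‖ * ‖k‖ := (A.le_opNorm₂ k k).trans (by gcongr)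
  have h1 : ‖p - k‖ ≤ 3 * K * ‖k‖ ^ 2 := by
    have e : p - k = (p - k - (1 / 2 : ℝ) • A k k) + (1 / 2 : ℝ) • A k k := by abel
    have h3 : K * ‖k‖ ^ 3 ≤ K * (2 * ‖k‖ ^ 2) := by
      have : ‖k‖ ^ 3 = ‖k‖ * ‖k‖ ^ 2 := by ring
      rw [this]; gcongr
    have h4 : ‖(1 / 2 : ℝ) • A k k‖ = 1 / 2 * ‖A k k‖ := by
      rw [norm_smul]; norm_num
    have h5 : 0 ≤ K * ‖k‖ * ‖k‖ := by positivity
    rw [e]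
    refine (norm_add_le _ _).trans ?_
    rw [h4]
    nlinarith
  have h2 : ‖p‖ ≤ (1 + 6 * K) * ‖k‖ := by
    have h3 := norm_le_norm_add_norm_sub' p k
    have h4 : 3 * K * ‖k‖ ^ 2 ≤ 3 * K * (2 * ‖k‖) := by
      rw [pow_two]; gcongr
    linarith
  have h3 : ‖(A - B) (p - k) p‖ ≤ (K + M) * (3 * K * ‖k‖ ^ 2) * ((1 + 6 * K) * ‖k‖) :=
    ((A - B).le_opNorm₂ _ _).trans (by gcongr)
  have h4 : ‖(A - B) k (p - k)‖ ≤ (K + M) * ‖k‖ * (3 * K * ‖k‖ ^ 2) :=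
    ((A - B).le_opNorm₂ _ _).trans (by gcongr)
  have e : p - q - (1 / 2 : ℝ) • (A - B) p p =
      (p - k - (1 / 2 : ℝ) • A k k) - (q - k - (1 / 2 : ℝ) • B k k)
      - (1 / 2 : ℝ) • ((A - B) (p - k) p + (A - B) k (p - k)) := by
    simp only [_root_.sub_apply, map_sub]
    module
  rw [e]
  refine (norm_sub_le _ _).trans ?_
  have h5 : ‖(1 / 2 : ℝ) • ((A - B) (p - k) p + (A - B) k (p - k))‖ ≤
      1 / 2 * ((K + M) * (3 * K * ‖k‖ ^ 2) * ((1 + 6 * K) * ‖k‖)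
        + (K + M) * ‖k‖ * (3 * K * ‖k‖ ^ 2)) := by
    rw [norm_smul, show ‖(1 / 2 : ℝ)‖ = 1 / 2 by norm_num]
    have := norm_add_le ((A - B) (p - k) p) ((A - B) k (p - k))
    linarith
  have h6 := norm_sub_le (p - k - (1 / 2 : ℝ) • A k k) (q - k - (1 / 2 : ℝ) • B k k)
  linarith
end
end

section
/- Comparison of two parallelisms on ℝ^d via the compatibility tensor: Let D ⊆ ℝ^d × ℝ^d be an open set containing the diagonal, let U, Ũ : D → End(ℝ^d) be smooth with U(x,x) = Ũ(x,x) = I for all x, and let ψ be a local logarithm whose domain also contains the diagonal. For m ∈ ℝ^d define S_m ∈ L(ℝ^d, End(ℝ^d)) by S_m⟨v⟩ := (D₂U)(m,m)⟨v⟩ − (D₂Ũ)(m,m)⟨v⟩ (derivatives in the second variable on the diagonal). Then for every x₀ ∈ ℝ^d there exist r > 0 and C < ∞ such that for all m, n ∈ B_r(x₀): Ũ(m,n) is invertible, (m,n) lies in the domains of U, Ũ and ψ, and ‖U(m,n) ∘ Ũ(m,n)⁻¹ − I − S_m⟨ψ(m,n)⟩‖ ≤ C |n − m|². -/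
noncomputable section

open scoped BigOperators

open Metric Filter Topology in
lemma slice_taylor {E V : Type*} [NormedAddCommGroup E] [NormedSpace ℝ E]
    [NormedAddCommGroup V] [NormedSpace ℝ V] (F : E × E → V) (x₀ : E)
    (hF : ContDiffAt ℝ 2 F (x₀, x₀)) :
    ∃ r C : ℝ, 0 < r ∧ 0 ≤ C ∧ ∀ m ∈ ball x₀ r, ∀ n ∈ ball x₀ r,
      ‖fderiv ℝ (fun w => F (m, w)) m‖ ≤ C ∧
      ‖F (m, n) - F (m, m) - fderiv ℝ (fun w => F (m, w)) m (n - m)‖ ≤ C * ‖n - m‖ ^ 2 := by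
  have h1 : ContDiffAt ℝ 1 (fderiv ℝ F) (x₀, x₀) := hF.fderiv_right (by norm_num)
  obtain ⟨K, t, ht, hK⟩ := h1.exists_lipschitzOnWith
  have hd : ∀ᶠ p in 𝓝 (x₀, x₀), DifferentiableAt ℝ F p :=
    (hF.eventually (by simp)).mono fun p hp => hp.differentiableAt (by norm_num)
  have hb : ∀ᶠ p in 𝓝 (x₀, x₀), ‖fderiv ℝ F p‖ < ‖fderiv ℝ F (x₀, x₀)‖ + 1 :=
    (h1.continuousAt.norm).eventually_lt_const (by linarith)
  obtain ⟨r, hr, H⟩ := Metric.eventually_nhds_iff_ball.1 (hd.and (hb.and ht))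
  set B := ‖fderiv ℝ F (x₀, x₀)‖ + 1 with hB
  have hB0 : 0 ≤ B := by positivity
  refine ⟨r, B + K, hr, by positivity, fun m hm n hn => ?_⟩
  have mem : ∀ w ∈ ball x₀ r, (m, w) ∈ ball (x₀, x₀) r := fun w hw => by
    rw [← ball_prod_same]; exact ⟨hm, hw⟩
  have hs : ∀ w ∈ ball x₀ r, HasFDerivAt (fun w => F (m, w))
      ((fderiv ℝ F (m, w)).comp (ContinuousLinearMap.inr ℝ E E)) w := fun w hw =>
    ((H _ (mem w hw)).1.hasFDerivAt).comp w (hasFDerivAt_prodMk_right m w)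
  have nin : ∀ L : E × E →L[ℝ] V, ‖L.comp (ContinuousLinearMap.inr ℝ E E)‖ ≤ ‖L‖ := fun L =>
    ContinuousLinearMap.opNorm_le_bound _ (norm_nonneg _) fun v => by
      simpa [Prod.norm_def] using L.le_opNorm (0, v)
  rw [(hs m hm).fderiv]
  refine ⟨(nin _).trans ?_, ?_⟩
  · have := (H _ (mem m hm)).2.1
    have := K.coe_nonneg
    linarith
  have hseg : segment ℝ m n ⊆ ball x₀ r := (convex_ball x₀ r).segment_subset hm hn
  have := (convex_segment m n).norm_image_sub_le_of_norm_hasFDerivWithin_le' (C := K * ‖n - m‖)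
    (φ := (fderiv ℝ F (m, m)).comp (ContinuousLinearMap.inr ℝ E E))
    (fun w hw => (hs w (hseg hw)).hasFDerivWithinAt) (fun w hw => ?_)
    (left_mem_segment ℝ m n) (right_mem_segment ℝ m n)
  · refine this.trans ?_
    nlinarith [mul_nonneg hB0 (sq_nonneg ‖n - m‖)]
  · rw [← ContinuousLinearMap.sub_comp]
    refine (nin _).trans ?_
    have h2 := hK.norm_sub_le (H _ (mem w (hseg hw))).2.2 (H _ (mem m hm)).2.2
    refine h2.trans ?_
    gcongr
    have : ‖w - m‖ ≤ ‖n - m‖ := by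
      simpa [norm_sub_rev] using norm_sub_le_of_mem_segment hw
    simpa [Prod.norm_def] using this

lemma hasFDerivAt_mul_inverse_one {E R : Type*} [NormedAddCommGroup E] [NormedSpace ℝ E]
    [NormedRing R] [NormedAlgebra ℝ R] [HasSummableGeomSeries R] {f g : E → R}
    {f' g' : E →L[ℝ] R} {x : E} (hf : HasFDerivAt f f' x) (hg : HasFDerivAt g g' x)
    (hf1 : f x = 1) (hg1 : g x = 1) :
    HasFDerivAt (fun w => f w * Ring.inverse (g w)) (f' - g') x := by
  have dI : HasFDerivAt (Ring.inverse : R → R)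
      (-ContinuousLinearMap.mulLeftRight ℝ R 1 1) (g x) := by
    rw [hg1]
    simpa using hasFDerivAt_ringInverse (𝕜 := ℝ) (1 : Rˣ)
  have := hf.mul' (dI.comp x hg)
  refine HasFDerivAt.congr_fderiv this ?_
  ext v : 1
  simp [hf1, hg1]
  abel

/-- **Comparison of two parallelisms via the compatibility tensor**
(Euclidean version of Theorem 3.15 of Driver–Semko):
`U(m,n) ∘ Ũ(m,n)⁻¹ = I + S_m⟨ψ(m,n)⟩ + O(|n − m|²)`, where
`S_m⟨v⟩ = D₂U(m,m)⟨v⟩ − D₂Ũ(m,m)⟨v⟩`. -/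
theorem parallelism_comparison
    {d : ℕ} {D : Set (Euc d × Euc d)} (hD : IsOpen D)
    (hdiag : ∀ x : Euc d, (x, x) ∈ D)
    {U Ut : Euc d × Euc d → Euc d →L[ℝ] Euc d}
    (hU : ContDiffOn ℝ (⊤ : ℕ∞) U D) (hUt : ContDiffOn ℝ (⊤ : ℕ∞) Ut D)
    (hUdiag : ∀ x : Euc d, U (x, x) = ContinuousLinearMap.id ℝ (Euc d))
    (hUtdiag : ∀ x : Euc d, Ut (x, x) = ContinuousLinearMap.id ℝ (Euc d))
    {Dψ : Set (Euc d × Euc d)} {ψ : Euc d × Euc d → Euc d}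
    (hψ : IsLocalLog Dψ ψ) (hψdiag : ∀ x : Euc d, (x, x) ∈ Dψ) :
    ∀ x₀ : Euc d, ∃ r C : ℝ, 0 < r ∧
      ∀ m ∈ Metric.ball x₀ r, ∀ n ∈ Metric.ball x₀ r,
        (m, n) ∈ D ∧ (m, n) ∈ Dψ ∧ IsUnit (Ut (m, n)) ∧
        ‖U (m, n) * Ring.inverse (Ut (m, n)) - 1 -
            (fderiv ℝ (fun w => U (m, w)) m - fderiv ℝ (fun w => Ut (m, w)) m)
              (ψ (m, n))‖
          ≤ C * ‖n - m‖ ^ 2 := by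
  intro x₀
  have hUc : ∀ x : Euc d, ContDiffAt ℝ (⊤ : ℕ∞) U (x, x) := fun x =>
    hU.contDiffAt (hD.mem_nhds (hdiag x))
  have hUtc : ∀ x : Euc d, ContDiffAt ℝ (⊤ : ℕ∞) Ut (x, x) := fun x =>
    hUt.contDiffAt (hD.mem_nhds (hdiag x))
  have hψc : ContDiffAt ℝ (⊤ : ℕ∞) ψ (x₀, x₀) :=
    hψ.smooth.contDiffAt (hψ.open_dom.mem_nhds (hψdiag x₀))
  have hle : (2 : WithTop ℕ∞) ≤ ((⊤ : ℕ∞) : WithTop ℕ∞) := by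
    exact WithTop.coe_le_coe.2 (le_top : (2 : ℕ∞) ≤ ⊤)
  have hinv : ContDiffAt ℝ 2 (Ring.inverse : (Euc d →L[ℝ] Euc d) → _) (Ut (x₀, x₀)) := by
    rw [hUtdiag]
    exact contDiffAt_ringInverse ℝ (1 : (Euc d →L[ℝ] Euc d)ˣ)
  have hG : ContDiffAt ℝ 2 (fun p => U p * Ring.inverse (Ut p)) (x₀, x₀) :=
    ((hUc x₀).of_le hle).mul (hinv.comp (x₀, x₀) ((hUtc x₀).of_le hle))
  obtain ⟨r1, C1, hr1, hC1, H1⟩ := slice_taylor U x₀ ((hUc x₀).of_le hle)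
  obtain ⟨r2, C2, hr2, hC2, H2⟩ := slice_taylor Ut x₀ ((hUtc x₀).of_le hle)
  obtain ⟨r3, C3, hr3, hC3, H3⟩ := slice_taylor _ x₀ hG
  obtain ⟨r4, C4, hr4, hC4, H4⟩ := slice_taylor ψ x₀ (hψc.of_le hle)
  have hunit : ∀ᶠ p in nhds (x₀, x₀), IsUnit (Ut p) := by
    refine (hUtc x₀).continuousAt.eventually_mem (Units.isOpen.mem_nhds ?_)
    rw [hUtdiag]
    exact isUnit_one
  obtain ⟨r5, hr5, H5⟩ := Metric.eventually_nhds_iff_ball.1 (hunit.and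
    ((hD.eventually_mem (hdiag x₀)).and (hψ.open_dom.eventually_mem (hψdiag x₀))))
  obtain ⟨r, hr, l1, l2, l3, l4, l5⟩ : ∃ r : ℝ, 0 < r ∧ r ≤ r1 ∧ r ≤ r2 ∧ r ≤ r3 ∧ r ≤ r4 ∧ r ≤ r5 :=
    ⟨min r1 (min r2 (min r3 (min r4 r5))), by positivity, by simp, by simp, by simp, by simp, by simp⟩
  refine ⟨r, C3 + (C1 + C2) * C4, hr, fun m hm n hn => ?_⟩
  have h5 := H5 (m, n) (by
    rw [← ball_prod_same]
    exact ⟨Metric.ball_subset_ball l5 hm, Metric.ball_subset_ball l5 hn⟩)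
  refine ⟨h5.2.1, h5.2.2, h5.1, ?_⟩
  have h1 := (H1 m (Metric.ball_subset_ball l1 hm) n (Metric.ball_subset_ball l1 hn)).1
  have h2 := (H2 m (Metric.ball_subset_ball l2 hm) n (Metric.ball_subset_ball l2 hn)).1
  have h3 := (H3 m (Metric.ball_subset_ball l3 hm) n (Metric.ball_subset_ball l3 hn)).2
  have h4 := (H4 m (Metric.ball_subset_ball l4 hm) n (Metric.ball_subset_ball l4 hn)).2
  have dU : HasFDerivAt (fun w => U (m, w)) (fderiv ℝ (fun w => U (m, w)) m) m :=
    (((hUc m).differentiableAt (by simp)).comp m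
      (hasFDerivAt_prodMk_right m m).differentiableAt).hasFDerivAt
  have dUt : HasFDerivAt (fun w => Ut (m, w)) (fderiv ℝ (fun w => Ut (m, w)) m) m :=
    (((hUtc m).differentiableAt (by simp)).comp m
      (hasFDerivAt_prodMk_right m m).differentiableAt).hasFDerivAt
  rw [hψ.diag_deriv m (hψdiag m), hψ.diag_zero m (hψdiag m)] at h4
  set A := fderiv ℝ (fun w => U (m, w)) m with hA
  set B := fderiv ℝ (fun w => Ut (m, w)) m with hB
  have dG : fderiv ℝ (fun w => U (m, w) * Ring.inverse (Ut (m, w))) m = A - B :=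
    (hasFDerivAt_mul_inverse_one dU dUt (hUdiag m) (hUtdiag m)).fderiv
  have e1 : U (m, m) * Ring.inverse (Ut (m, m)) = 1 := by
    rw [hUtdiag, hUdiag]
    exact (one_mul _).trans (Ring.inverse_one _)
  rw [dG, e1] at h3
  have hS : ‖A - B‖ ≤ C1 + C2 := (norm_sub_le _ _).trans (add_le_add h1 h2)
  have key : U (m, n) * Ring.inverse (Ut (m, n)) - 1 - (A - B) (ψ (m, n)) =
      (U (m, n) * Ring.inverse (Ut (m, n)) - 1 - (A - B) (n - m)) -
        (A - B) (ψ (m, n) - 0 - ContinuousLinearMap.id ℝ (Euc d) (n - m)) := by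
    rw [sub_zero, ContinuousLinearMap.id_apply, map_sub (A - B) (ψ (m, n)) (n - m)]
    abel
  rw [key]
  calc _ ≤ _ := norm_sub_le _ _
    _ ≤ C3 * ‖n - m‖ ^ 2 + (C1 + C2) * (C4 * ‖n - m‖ ^ 2) :=
        add_le_add h3 ((A - B).le_of_opNorm_le_of_le hS h4)
    _ = _ := by ring
end
end
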